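/- arXiv:2512.12804 — 4 statements merged into one kernel-verified Lean document; each statement's English description precedes it below -/
import Mathlib

section
/- For every causal model M and any two binary endogenous variables X, Y ∈ V (with values in {0,1}): the Probability of Necessity and Sufficiency computed via the B-semantics equals the one computed in the PO-SCM, i.e., PNS^B = P^B((Y=1)_{X←1}, (Y=0)_{X←0}) = P^N((Y=1)_{X←1}, (Y=0)_{X←0}) = PNS^N. -/
/-!
Fixing the values `f` of the potential outcome variables turns the PO-SCM of `M` into a
deterministic model `M.fixOutcomes f` over the original variables, so the PO-SCM is a mixture of
these models. Conditioning the mixture on a world `w` fixes, for every endogenous variable, the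
potential outcome at the parent values of `w` to the actual value and leaves the other potential
outcomes independent with their original laws. This is the actualized refinement of `M` at `w`,
so a single basic counterfactual has the same probability, given `w`, under both semantics.

For several conjuncts this is not enough, since the mixture may correlate them. But whenever the
antecedent of a conjunct holds in `w`, the conjunct is, in either semantics, just the indicator of
its consequent in `w` (consistency), and can be factored out of the mixture. The antecedents
`X = 1` and `X = 0` cover all worlds, so at most one genuinely counterfactual conjunct is left.
-/

open Finset

noncomputable section

attribute [local instance] Classical.propDecidable

/-- An assignment of values to the variables. -/
abbrev Asg {ν : Type} (Val : ν → Type) : Type := (i : ν) → Val i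

/-- A probabilistic causal model (a causal Bayesian network with explicit exogenous
variables): a signature (variables `ν` with value sets `Val`), a graph given by the
parent map `pa` (with `ord` a witness of acyclicity, and the variables in `exo` being
the roots), and a joint probability distribution that is Markov relative to the graph,
presented by the conditional probability table `cpt i w x = P(i = x | pa i = w|_{pa i})`
of each variable given its parents (for exogenous variables this is the marginal). -/
structure CM (ν : Type) (Val : ν → Type) : Type where
  exo : Finset ν
  pa : ν → Finset ν
  ord : ν → ℕ
  cpt : (i : ν) → Asg Val → Val i → ℝ

/-- A basic counterfactual event `(Y = yv)_{X ← xv}`. -/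
structure CFEvent (ν : Type) (Val : ν → Type) : Type where
  X : Finset ν
  xv : Asg Val
  Y : Finset ν
  yv : Asg Val

namespace CM

variable {ν : Type} {Val : ν → Type}

/-- Well-formedness of a causal model: exogenous variables are roots, the graph is
acyclic, the conditional probability table of each variable depends only on its
parents, and each table is a probability distribution. -/
structure WF [Fintype ν] [∀ i, Fintype (Val i)] (M : CM ν Val) : Prop where
  pa_exo : ∀ i ∈ M.exo, M.pa i = ∅
  acyclic : ∀ i j, j ∈ M.pa i → M.ord j < M.ord i
  cpt_pa : ∀ (i : ν) (w w' : Asg Val) (x : Val i),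
    (∀ j ∈ M.pa i, w j = w' j) → M.cpt i w x = M.cpt i w' x
  cpt_nonneg : ∀ i w x, 0 ≤ M.cpt i w x
  cpt_sum : ∀ i w, ∑ x, M.cpt i w x = 1

variable [Fintype ν] [∀ i, Fintype (Val i)] [∀ i, Nonempty (Val i)]

variable (M : CM ν Val)

/-- The joint distribution `P(U = u, V = v)` (Markov factorization). -/
def joint (w : Asg Val) : ℝ := ∏ i, M.cpt i w (w i)

/-- The interventional distribution `P_{do(X = xv)}` (truncated factorization). -/
def pdo (X : Finset ν) (xv w : Asg Val) : ℝ :=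
  if ∀ i ∈ X, w i = xv i then ∏ i ∈ Xᶜ, M.cpt i w (w i) else 0

/-- `P_{do(X = xv)}(Y = yv | U = u)`, where `u` is the exogenous part of `w`:
the probability of the basic counterfactual `(Y = yv)_{X ← xv}` given the world `w`. -/
def cfBasic (X : Finset ν) (xv : Asg Val) (Y : Finset ν) (yv : Asg Val) (w : Asg Val) : ℝ :=
  (∑ w' : Asg Val,
      if (∀ i ∈ M.exo, w' i = w i) ∧ ∀ i ∈ Y, w' i = yv i then M.pdo X xv w' else 0) /
  (∑ w' : Asg Val, if ∀ i ∈ M.exo, w' i = w i then M.pdo X xv w' else 0)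

/-- The probability of a complex counterfactual
`P(y_x, …, z_w) = Σ_{(u,v)} P(y_x | u,v) ⋯ P(z_w | u,v) P(u,v)`. -/
def cfProb (evs : List (CFEvent ν Val)) : ℝ :=
  ∑ w : Asg Val, (evs.map fun e => M.cfBasic e.X e.xv e.Y e.yv w).prod * M.joint w

/-- Conditional probability of a complex counterfactual given an actual event `Z = zv`:
`P(y_x, …, z_w | Z = zv) = P(y_x, …, z_w, Z = zv) / P(Z = zv)`. -/
def cfProbCond (evs : List (CFEvent ν Val)) (Z : Finset ν) (zv : Asg Val) : ℝ :=
  (∑ w : Asg Val,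
      (if ∀ i ∈ Z, w i = zv i then (evs.map fun e => M.cfBasic e.X e.xv e.Y e.yv w).prod
       else 0) * M.joint w) /
  (∑ w : Asg Val, if ∀ i ∈ Z, w i = zv i then M.joint w else 0)

/-- `M` is a structural causal model: every endogenous variable is a deterministic
function of its parents (the exogenous variables are automatically mutually
independent in this presentation). -/
def IsSCM : Prop :=
  ∀ i ∉ M.exo, ∀ (w : Asg Val) (x : Val i), M.cpt i w x = 0 ∨ M.cpt i w x = 1

/-- The actualized refinement `M^{(u,v)}` of `M` at the actual world `a`:
for each endogenous variable, the conditional distribution given the *actual* values of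
its parents is replaced by the point mass at the actual value of the variable. -/
def refine (a : Asg Val) : CM ν Val where
  exo := M.exo
  pa := M.pa
  ord := M.ord
  cpt := fun i w x =>
    if i ∉ M.exo ∧ ∀ j ∈ M.pa i, w j = a j then (if x = a i then 1 else 0)
    else M.cpt i w x

/-- The B-semantics probability of a basic counterfactual,
`P^B((Y = yv)_{X ← xv} | a) = (P^{a})_{do(X = xv)}(Y = yv | U = u)` where `u` is the
exogenous part of the actual world `a`. -/
def pbBasic (a : Asg Val) (X : Finset ν) (xv : Asg Val) (Y : Finset ν) (yv : Asg Val) : ℝ :=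
  (M.refine a).cfBasic X xv Y yv a

/-- The B-semantics probability of a complex counterfactual. -/
def pbProb (evs : List (CFEvent ν Val)) : ℝ :=
  ∑ w : Asg Val, (evs.map fun e => M.pbBasic w e.X e.xv e.Y e.yv).prod * M.joint w

/-- The conditional B-semantics probability of a complex counterfactual given `Z = zv`. -/
def pbProbCond (evs : List (CFEvent ν Val)) (Z : Finset ν) (zv : Asg Val) : ℝ :=
  (∑ w : Asg Val,
      (if ∀ i ∈ Z, w i = zv i then (evs.map fun e => M.pbBasic w e.X e.xv e.Y e.yv).prod
       else 0) * M.joint w) /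
  (∑ w : Asg Val, if ∀ i ∈ Z, w i = zv i then M.joint w else 0)

/-- An assignment of values to the parents of `i`. -/
def PaAsg (i : ν) : Type := (j : {j : ν // j ∈ M.pa i}) → Val j.1

instance (i : ν) : Fintype (M.PaAsg i) := by unfold PaAsg; infer_instance
instance (i : ν) : Nonempty (M.PaAsg i) := ⟨fun j => Classical.arbitrary (Val j.1)⟩

/-- Extend an assignment of the parents of `i` to a full assignment (arbitrarily). -/
def extendPa (i : ν) (κ : M.PaAsg i) : Asg Val :=
  fun j => if h : j ∈ M.pa i then κ ⟨j, h⟩ else Classical.arbitrary (Val j)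

/-- The index type of the potential outcome variables `X_{pa_X}` of the PO-SCM:
one for each endogenous variable `X` and each value `pa_X` of its parents. -/
def POI : Type := Σ i : {i : ν // i ∉ M.exo}, M.PaAsg i.1

instance : Fintype (POI M) := by unfold POI; infer_instance

/-- The value set of the potential outcome variable `X_{pa_X}` is that of `X`. -/
def POB : POI M → Type := fun p => Val p.1.1

instance (p : POI M) : Fintype (POB M p) := by unfold POB; infer_instance
instance (p : POI M) : Nonempty (POB M p) := by unfold POB; infer_instance

/-- The type of values of the response variable `U_X` of the canonical frame:
functions from values of the parents of `X` to values of `X`. -/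
def RType (i : ν) : Type := M.PaAsg i → Val i

instance (i : ν) : Fintype (M.RType i) := by unfold RType; infer_instance
instance (i : ν) : Nonempty (M.RType i) := ⟨fun _ => Classical.arbitrary (Val i)⟩

/-- The index type of the response variables of the canonical frame:
one for each endogenous variable. -/
def RVI : Type := {i : ν // i ∉ M.exo}

instance : Fintype (RVI M) := by unfold RVI; infer_instance

/-- The value set of the response variable `U_X`. -/
def RB : RVI M → Type := fun p => M.RType p.1

instance (p : RVI M) : Fintype (RB M p) := by unfold RB; infer_instance
instance (p : RVI M) : Nonempty (RB M p) := by unfold RB; infer_instance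

end CM

/-- The family of value sets of an extended signature `ν ⊕ β`. -/
def SumVal {ν β : Type} (Val : ν → Type) (B : β → Type) : ν ⊕ β → Type := fun i =>
  match i with
  | .inl j => Val j
  | .inr b => B b

section SumValInst

variable {ν β : Type} {Val : ν → Type} {B : β → Type}

instance [∀ i, Fintype (Val i)] [∀ b, Fintype (B b)] (i : ν ⊕ β) :
    Fintype (SumVal Val B i) := by
  cases i with
  | inl j => exact inferInstanceAs (Fintype (Val j))
  | inr b => exact inferInstanceAs (Fintype (B b))

instance [∀ i, Nonempty (Val i)] [∀ b, Nonempty (B b)] (i : ν ⊕ β) :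
    Nonempty (SumVal Val B i) := by
  cases i with
  | inl j => exact inferInstanceAs (Nonempty (Val j))
  | inr b => exact inferInstanceAs (Nonempty (B b))

/-- Lift an assignment on `ν` to one on `ν ⊕ β` (arbitrary on the new variables). -/
def liftAsg [∀ b, Nonempty (B b)] (xv : Asg Val) : Asg (SumVal Val B) := fun i =>
  match i with
  | .inl j => xv j
  | .inr b => Classical.arbitrary (B b)

/-- Lift a counterfactual event on the original variables to the extended signature. -/
def liftCFEvent [∀ b, Nonempty (B b)] (e : CFEvent ν Val) : CFEvent (ν ⊕ β) (SumVal Val B) :=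
  ⟨e.X.image Sum.inl, liftAsg e.xv, e.Y.image Sum.inl, liftAsg e.yv⟩

variable [Fintype ν] [Fintype β] [∀ i, Fintype (Val i)] [∀ b, Fintype (B b)]
  [∀ i, Nonempty (Val i)] [∀ b, Nonempty (B b)]

/-- The probability, computed in a model `N` over an extended signature, of a complex
counterfactual over the original variables. -/
def extProb (N : CM (ν ⊕ β) (SumVal Val B)) (evs : List (CFEvent ν Val)) : ℝ :=
  N.cfProb (evs.map liftCFEvent)

/-- The probability, computed in a model `N` over an extended signature, of a complex
counterfactual over the original variables, conditional on an actual event `Z = zv`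
over the original variables. -/
def extProbCond (N : CM (ν ⊕ β) (SumVal Val B)) (evs : List (CFEvent ν Val))
    (Z : Finset ν) (zv : Asg Val) : ℝ :=
  N.cfProbCond (evs.map liftCFEvent) (Z.image Sum.inl) (liftAsg zv)

/-- The probability, computed in a model `N` over an extended signature, of a basic
counterfactual conditional on the values `a` of *all* the original variables
(marginalizing over the added exogenous variables), via the law of total probability. -/
def extBasicCond (N : CM (ν ⊕ β) (SumVal Val B)) (a : Asg Val)
    (X : Finset ν) (xv : Asg Val) (Y : Finset ν) (yv : Asg Val) : ℝ :=
  (∑ w : Asg (SumVal Val B),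
      if ∀ i : ν, w (Sum.inl i) = a i then
        N.cfBasic (X.image Sum.inl) (liftAsg xv) (Y.image Sum.inl) (liftAsg yv) w * N.joint w
      else 0) /
  (∑ w : Asg (SumVal Val B), if ∀ i : ν, w (Sum.inl i) = a i then N.joint w else 0)

end SumValInst

namespace CM

variable {ν : Type} {Val : ν → Type} [Fintype ν] [∀ i, Fintype (Val i)] [∀ i, Nonempty (Val i)]
variable (M : CM ν Val)

/-- The PO-SCM `M^N` of `M`: the structural causal model obtained from `M` by adding,
for each endogenous variable `X` and each value `pa_X` of its parents, an exogenous
potential outcome variable `X_{pa_X}` (with marginal `P_M(X | Pa_X = pa_X)`, all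
exogenous variables mutually independent), and the structural equation
`X = X_{pa_X}` whenever `Pa_X = pa_X`. -/
def MN : CM (ν ⊕ POI M) (SumVal Val (POB M)) where
  exo := (M.exo.image Sum.inl) ∪ (univ.image Sum.inr)
  pa := fun i =>
    match i with
    | .inl j => ((M.pa j).image Sum.inl) ∪
        ((univ.filter fun p : POI M => p.1.1 = j).image Sum.inr)
    | .inr _ => ∅
  ord := fun i =>
    match i with
    | .inl j => M.ord j + 1
    | .inr _ => 0
  cpt := fun i =>
    match i with
    | .inl j => fun w x =>
        if h : j ∈ M.exo then M.cpt j (fun k => w (Sum.inl k)) x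
        else if x = w (Sum.inr ⟨⟨j, h⟩, fun k => w (Sum.inl k.1)⟩) then 1 else 0
    | .inr p => fun _ x => M.cpt p.1.1 (M.extendPa p.1.1 p.2) x

/-- `P^N(y_x, …, z_w)`: the probability of a complex counterfactual computed in the
PO-SCM `M^N`. -/
def pnProb (evs : List (CFEvent ν Val)) : ℝ := extProb M.MN evs

/-- `P^N(y_x, …, z_w | Z = zv)`: the conditional probability of a complex
counterfactual computed in the PO-SCM `M^N`, given an actual event on the
endogenous variables. -/
def pnProbCond (evs : List (CFEvent ν Val)) (Z : Finset ν) (zv : Asg Val) : ℝ :=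
  extProbCond M.MN evs Z zv

/-- `P^N((Y = yv)_{X ← xv} | U = u, V = v)`: the probability of a basic counterfactual
computed in the PO-SCM `M^N`, conditional on the exogenous and endogenous variables of
`M` only (marginalizing over the potential outcome variables). -/
def pnBasicCond (a : Asg Val) (X : Finset ν) (xv : Asg Val) (Y : Finset ν) (yv : Asg Val) : ℝ :=
  extBasicCond M.MN a X xv Y yv

/-- A canonical SCM for `M`, determined by a distribution `q` of the response variables:
the SCM over the canonical frame, which adds for each endogenous variable `X` an
exogenous response variable `U_X` ranging over the functions `f_X : R(Pa_X) → R(X)`,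
with the structural equation `X = f_X(Pa_X)` where `f_X` is the value of `U_X`. -/
def canonSCM (q : (p : RVI M) → RType M p.1 → ℝ) : CM (ν ⊕ RVI M) (SumVal Val (RB M)) where
  exo := (M.exo.image Sum.inl) ∪ (univ.image Sum.inr)
  pa := fun i =>
    match i with
    | .inl j => ((M.pa j).image Sum.inl) ∪
        ((univ.filter fun p : RVI M => p.1 = j).image Sum.inr)
    | .inr _ => ∅
  ord := fun i =>
    match i with
    | .inl j => M.ord j + 1
    | .inr _ => 0
  cpt := fun i =>
    match i with
    | .inl j => fun w x =>
        if h : j ∈ M.exo then M.cpt j (fun k => w (Sum.inl k)) x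
        else if x = w (Sum.inr ⟨j, h⟩) (fun k => w (Sum.inl k.1)) then 1 else 0
    | .inr p => fun _ x => q p x

/-- `q` is the distribution of the response variables of a canonical SCM for `M`:
it is a probability distribution (the response variables being mutually independent and
independent of the exogenous variables of `M`, whose distribution is kept), and it
reproduces the conditional probability tables of `M`:
`P_M(X = x | Pa_X = pa_X) = Σ_{f_X with f_X(pa_X) = x} P(U_X = f_X)`. -/
def IsCanonicalDist (q : (p : RVI M) → RType M p.1 → ℝ) : Prop :=
  (∀ p x, 0 ≤ q p x) ∧ (∀ p, ∑ f, q p f = 1) ∧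
  ∀ (p : RVI M) (κ : M.PaAsg p.1) (x : Val p.1),
    M.cpt p.1 (M.extendPa p.1 κ) x = ∑ f ∈ univ.filter (fun f : RType M p.1 => f κ = x), q p f

/-- The distribution of the response variables of the GH-SCM:
`P(U_X = f_X) = ∏_{pa_X} P_M(X = f_X(pa_X) | Pa_X = pa_X)`. -/
def qGH : (p : RVI M) → RType M p.1 → ℝ := fun p f =>
  ∏ κ : M.PaAsg p.1, M.cpt p.1 (M.extendPa p.1 κ) (f κ)

end CM

/-- A default assignment. -/
def dfltAsg {ν : Type} (Val : ν → Type) [∀ i, Nonempty (Val i)] : Asg Val :=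
  fun i => Classical.arbitrary (Val i)

/-- The assignments `w` and `a` take the same values on `S`. -/
abbrev AgreeOn {ν : Type} {Val : ν → Type} (S : Finset ν) (w a : Asg Val) : Prop :=
  ∀ i ∈ S, w i = a i

section AgreeOn

variable {ν : Type} {Val : ν → Type} {S T : Finset ν} {w a b : Asg Val}

theorem agreeOn_univ_iff [Fintype ν] : AgreeOn univ w a ↔ w = a := by
  simp [AgreeOn, funext_iff]

theorem agreeOn_insert_update_iff {i : ν} (hi : i ∉ S) (x : Val i) :
    AgreeOn (insert i S) w (Function.update a i x) ↔ w i = x ∧ AgreeOn S w a := by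
  have hne : ∀ j ∈ S, j ≠ i := fun j hj hji => hi (hji ▸ hj)
  rw [AgreeOn, forall_mem_insert, Function.update_self]
  exact and_congr_right fun _ => forall₂_congr fun j hj => by
    rw [Function.update_of_ne (hne j hj)]

theorem agreeOn_union_piecewise_iff (h : Disjoint T S) :
    AgreeOn (S ∪ T) w (T.piecewise b a) ↔ AgreeOn S w a ∧ AgreeOn T w b := by
  rw [AgreeOn, forall_mem_union]
  refine and_congr (forall₂_congr fun i hi => ?_) (forall₂_congr fun i hi => ?_)
  · rw [piecewise_eq_of_notMem _ _ _ (disjoint_right.1 h hi)]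
  · rw [piecewise_eq_of_mem _ _ _ hi]

end AgreeOn

section ProductDistribution

variable {R : Type*} [CommSemiring R]

theorem prod_mul_prod_notMem {ι : Type*} [Fintype ι] (s : Finset ι) (F : ι → R) :
    (∏ i ∈ s, F i) * ∏ i : {i // i ∉ s}, F i = ∏ i, F i := by
  rw [← prod_mul_prod_compl s F, prod_subtype sᶜ fun _ => mem_compl]

theorem sum_prod_agreeOn {ι : Type} {V : ι → Type} [Fintype ι] [∀ i, Fintype (V i)]
    (p : ∀ i, V i → R) (hp : ∀ i, ∑ v, p i v = 1) (S : Finset ι) (a : Asg V) :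
    ∑ f : Asg V with AgreeOn S f a, ∏ i, p i (f i) = ∏ i ∈ S, p i (a i) := by
  have hpi : (univ.filter fun f : Asg V => AgreeOn S f a) =
      Fintype.piFinset fun i => if i ∈ S then {a i} else univ := by
    ext f
    simp only [mem_filter_univ, Fintype.mem_piFinset]
    refine forall_congr' fun i => ?_
    by_cases hi : i ∈ S <;> simp [hi]
  rw [hpi, ← prod_univ_sum, ← Fintype.prod_ite_mem S]
  refine prod_congr rfl fun i _ => ?_
  split_ifs
  · exact sum_singleton _ _
  · exact hp i

theorem sum_ite_mul_prod {ι V : Type} [Fintype ι] [Fintype V] (p : ι → V → R)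
    (hp : ∀ i, ∑ v, p i v = 1) (i : ι) (x : V) :
    ∑ f : ι → V, (if x = f i then 1 else 0) * ∏ k, p k (f k) = p i x := by
  have h := sum_prod_agreeOn (V := fun _ => V) p hp {i} fun _ => x
  rw [prod_singleton, sum_filter] at h
  rw [← h]
  refine sum_congr rfl fun f _ => ?_
  simp only [AgreeOn, mem_singleton, forall_eq, ite_mul, one_mul, zero_mul, eq_comm (a := x)]

theorem sum_ite_mul_ite_mul_prod {ι V : Type} [Fintype ι] [Fintype V] (p : ι → V → R)
    (hp : ∀ i, ∑ v, p i v = 1) {i j : ι} (hij : i ≠ j) (x y : V) :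
    ∑ f : ι → V, (if x = f i then 1 else 0) * (if y = f j then 1 else 0) * ∏ k, p k (f k) =
      p i x * p j y := by
  have h := sum_prod_agreeOn (V := fun _ => V) p hp (insert i {j})
    (Function.update (fun _ => y) i x)
  rw [prod_pair hij, Function.update_self, Function.update_of_ne hij.symm, sum_filter] at h
  rw [← h]
  refine sum_congr rfl fun f _ => ?_
  simp only [agreeOn_insert_update_iff (notMem_singleton.2 hij), AgreeOn, mem_singleton,
    forall_eq, ite_and, ite_mul, one_mul, zero_mul, eq_comm (a := x), eq_comm (a := y)]

/- The `Fintype` instance on the assignments is a free parameter because the one of `Asg (POB M)`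
differs from the one that `Sigma` provides. -/
theorem sum_prod_sigma {ι : Type*} {κ V : ι → Type*} [Fintype ι] [∀ i, Fintype (κ i)]
    [∀ i, Fintype (V i)] {_ : Fintype ((p : Σ i, κ i) → V p.1)} (G : ∀ i, (κ i → V i) → R) :
    ∑ f : (p : Σ i, κ i) → V p.1, ∏ i, G i (fun k => f ⟨i, k⟩) = ∏ i, ∑ g, G i g := by
  rw [prod_univ_sum, Fintype.piFinset_univ]
  exact (Equiv.piCurry fun i (_ : κ i) => V i).sum_comp fun g => ∏ i, G i (g i)

end ProductDistribution

namespace CM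

section Interventional

variable {ν : Type} {Val : ν → Type} [Fintype ν] {N : CM ν Val}

/- `DecidableEq ν` is a free parameter here and in `cfBasic_def` and `cfProb_def` so that they
rewrite over `ν ⊕ β`, where the instance found is not `Classical.propDecidable`. -/
theorem pdo_def [DecidableEq ν] (X : Finset ν) (xv w : Asg Val) :
    N.pdo X xv w = if AgreeOn X w xv then ∏ i ∈ Xᶜ, N.cpt i w (w i) else 0 := by
  rw [pdo]
  congr!

theorem pdo_mul_joint (N N' : CM ν Val) {X : Finset ν} {xv w w' : Asg Val}
    (h : AgreeOn X w' xv) :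
    N.pdo X xv w' * N'.joint w =
      ∏ i, (if i ∈ Xᶜ then N.cpt i w' (w' i) else 1) * N'.cpt i w (w i) := by
  rw [pdo, if_pos h, joint, prod_mul_distrib, Fintype.prod_ite_mem]

variable [∀ i, Fintype (Val i)]

theorem cfBasic_def [DecidableEq ν] (X : Finset ν) (xv : Asg Val) (Y : Finset ν) (yv w : Asg Val) :
    N.cfBasic X xv Y yv w =
      (∑ w', if AgreeOn N.exo w' w ∧ AgreeOn Y w' yv then N.pdo X xv w' else 0) /
        ∑ w', if AgreeOn N.exo w' w then N.pdo X xv w' else 0 := by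
  rw [cfBasic]
  congr!

theorem cfProb_def [DecidableEq ν] (evs : List (CFEvent ν Val)) :
    N.cfProb evs =
      ∑ w, (evs.map fun e => N.cfBasic e.X e.xv e.Y e.yv w).prod * N.joint w := by
  rw [cfProb]
  congr!

theorem pdo_eq_sum_pdo_insert (hN : N.WF) {S : Finset ν} {i : ν} (hi : i ∉ S)
    (hpa : N.pa i ⊆ S) (a w : Asg Val) :
    N.pdo S a w = ∑ x, N.cpt i a x * N.pdo (insert i S) (Function.update a i x) w := by
  simp only [pdo_def, agreeOn_insert_update_iff hi]
  rw [sum_eq_single (w i)]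
  · by_cases hw : AgreeOn S w a
    · rw [if_pos hw, if_pos ⟨rfl, hw⟩, compl_insert, ← mul_prod_erase _ _ (mem_compl.2 hi),
        hN.cpt_pa i w a (w i) fun j hj => hw j (hpa hj)]
    · rw [if_neg hw, if_neg fun h => hw h.2, mul_zero]
  · intro x _ hx
    rw [if_neg fun h => hx h.1.symm, mul_zero]
  · simp

theorem sum_pdo (hN : N.WF) (S : Finset ν) (a : Asg Val) : ∑ w, N.pdo S a w = 1 := by
  induction hn : #Sᶜ generalizing S a with
  | zero =>
    obtain rfl : S = univ := by simpa using hn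
    simp [pdo_def, agreeOn_univ_iff]
  | succ n ih =>
    obtain ⟨i, hi, hmin⟩ := exists_min_image Sᶜ N.ord (card_pos.1 (by omega))
    have hiS : i ∉ S := mem_compl.1 hi
    have hpa : N.pa i ⊆ S := fun j hj => by
      by_contra hjS
      exact (hN.acyclic i j hj).not_ge (hmin j (mem_compl.2 hjS))
    have hcard : #(insert i S)ᶜ = n := by
      rw [compl_insert, card_erase_of_mem hi, hn, Nat.add_sub_cancel]
    simp only [pdo_eq_sum_pdo_insert hN hiS hpa a]
    rw [sum_comm]
    simp only [← mul_sum, ih _ _ hcard, mul_one, hN.cpt_sum]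

theorem pdo_eq_prod_exo_mul_pdo (hN : N.WF) {X : Finset ν} (hX : Disjoint X N.exo)
    (xv : Asg Val) {w w' : Asg Val} (hw : AgreeOn N.exo w' w) :
    N.pdo X xv w' =
      (∏ i ∈ N.exo, N.cpt i w (w i)) * N.pdo (N.exo ∪ X) (X.piecewise xv w) w' := by
  have hexo : ∏ i ∈ N.exo, N.cpt i w (w i) = ∏ i ∈ N.exo, N.cpt i w' (w' i) :=
    prod_congr rfl fun i hi => by
      rw [hw i hi]
      exact hN.cpt_pa i _ _ _ (by simp [hN.pa_exo i hi])
  have hsplit : Xᶜ \ N.exo = (N.exo ∪ X)ᶜ := by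
    rw [compl_union, inter_comm, sdiff_eq_inter_compl]
  rw [pdo_def, pdo_def, mul_ite, mul_zero, hexo, mul_comm, ← hsplit,
    prod_sdiff (subset_compl_iff_disjoint_left.2 hX)]
  exact if_congr ((agreeOn_union_piecewise_iff hX).trans (and_iff_right hw)).symm rfl rfl

theorem sum_pdo_agreeOn_exo (hN : N.WF) {X : Finset ν} (hX : Disjoint X N.exo)
    (xv w : Asg Val) :
    ∑ w', (if AgreeOn N.exo w' w then N.pdo X xv w' else 0) =
      ∏ i ∈ N.exo, N.cpt i w (w i) := by
  rw [← mul_one (∏ i ∈ N.exo, _), ← sum_pdo hN (N.exo ∪ X) (X.piecewise xv w), mul_sum]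
  refine sum_congr rfl fun w' _ => ?_
  split_ifs with h
  · exact pdo_eq_prod_exo_mul_pdo hN hX xv h
  · rw [pdo_def, if_neg fun h' => h ((agreeOn_union_piecewise_iff hX).1 h').1, mul_zero]

end Interventional

section Consistency

variable {ν : Type} {Val : ν → Type}

/-- The world `w` is actual in `N`: each endogenous variable takes its value in `w` with
certainty as soon as its parents do. -/
def IsActualized (N : CM ν Val) (w : Asg Val) : Prop :=
  ∀ i ∉ N.exo, ∀ w', AgreeOn (N.pa i) w' w → ∀ x ≠ w i, N.cpt i w' x = 0

variable [Fintype ν] [∀ i, Fintype (Val i)] {N : CM ν Val} {w : Asg Val}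

theorem IsActualized.pdo_eq_zero (hact : N.IsActualized w) (hN : N.WF) {X : Finset ν}
    {xv w' : Asg Val} (hX : AgreeOn X w xv) (hexo : AgreeOn N.exo w' w) (hne : w' ≠ w) :
    N.pdo X xv w' = 0 := by
  rw [pdo, ite_eq_right_iff]
  intro hX'
  -- A variable of minimal order at which `w'` deviates from `w` has its parents as in `w`.
  have hdev : (univ.filter fun i => w' i ≠ w i).Nonempty := by
    obtain ⟨i, hi⟩ := Function.ne_iff.1 hne
    exact ⟨i, (mem_filter_univ i).2 hi⟩
  obtain ⟨i, hi, hmin⟩ := exists_min_image _ N.ord hdev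
  rw [mem_filter_univ] at hi
  have hpa : AgreeOn (N.pa i) w' w := fun j hj => by
    by_contra hj'
    exact (hN.acyclic i j hj).not_ge (hmin j ((mem_filter_univ j).2 hj'))
  have hiX : i ∈ Xᶜ := mem_compl.2 fun h => hi ((hX' i h).trans (hX i h).symm)
  exact prod_eq_zero hiX (hact i (fun h => hi (hexo i h)) w' hpa _ hi)

theorem IsActualized.cfBasic_eq (hact : N.IsActualized w) (hN : N.WF) (hw : N.joint w ≠ 0)
    {X : Finset ν} {xv : Asg Val} (hX : AgreeOn X w xv) (Y : Finset ν) (yv : Asg Val) :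
    N.cfBasic X xv Y yv w = if AgreeOn Y w yv then 1 else 0 := by
  have hpdo : N.pdo X xv w ≠ 0 := by
    rw [pdo, if_pos hX, prod_ne_zero_iff]
    exact fun i _ => prod_ne_zero_iff.1 hw i (mem_univ i)
  have hzero : ∀ w' ≠ w, AgreeOn N.exo w' w → N.pdo X xv w' = 0 :=
    fun w' hne hexo => hact.pdo_eq_zero hN hX hexo hne
  have hden : ∑ w', (if AgreeOn N.exo w' w then N.pdo X xv w' else 0) = N.pdo X xv w := by
    rw [Fintype.sum_eq_single w fun w' hne => ite_eq_right_iff.2 (hzero w' hne),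
      if_pos fun _ _ => rfl]
  have hnum : ∑ w', (if AgreeOn N.exo w' w ∧ AgreeOn Y w' yv then N.pdo X xv w' else 0) =
      if AgreeOn Y w yv then N.pdo X xv w else 0 := by
    rw [Fintype.sum_eq_single w fun w' hne =>
      ite_eq_right_iff.2 fun h => hzero w' hne h.1]
    exact if_congr (and_iff_right fun _ _ => rfl) rfl rfl
  rw [cfBasic_def, hden, hnum, ite_div, div_self hpdo, zero_div]

theorem IsActualized.prod_cfBasic_eq (hact : N.IsActualized w) (hN : N.WF)
    (hw : N.joint w ≠ 0) {evs : List (CFEvent ν Val)} (hX : ∀ e ∈ evs, AgreeOn e.X w e.xv) :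
    (evs.map fun e => N.cfBasic e.X e.xv e.Y e.yv w).prod =
      (evs.map fun e => if AgreeOn e.Y w e.yv then 1 else 0).prod := by
  rw [List.map_congr_left fun e he => hact.cfBasic_eq hN hw (hX e he) e.Y e.yv]

end Consistency

section Refine

variable {ν : Type} {Val : ν → Type} [Fintype ν] {M : CM ν Val}

theorem refine_cpt_of_agreeOn {a w : Asg Val} {i : ν} (hi : i ∉ M.exo)
    (h : AgreeOn (M.pa i) w a) (x : Val i) :
    (M.refine a).cpt i w x = if x = a i then 1 else 0 :=
  if_pos ⟨hi, h⟩

theorem refine_cpt_of_not_agreeOn {a w : Asg Val} {i : ν} (h : ¬AgreeOn (M.pa i) w a) :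
    (M.refine a).cpt i w = M.cpt i w :=
  funext fun _ => if_neg fun h' => h h'.2

theorem refine_cpt_of_mem_exo {a w : Asg Val} {i : ν} (hi : i ∈ M.exo) :
    (M.refine a).cpt i w = M.cpt i w :=
  funext fun _ => if_neg fun h => h.1 hi

theorem isActualized_refine (M : CM ν Val) (a : Asg Val) : (M.refine a).IsActualized a :=
  fun _ hi _ h x hx => (refine_cpt_of_agreeOn (M := M) hi h x).trans (if_neg hx)

theorem joint_refine_ne_zero {w : Asg Val} (hw : M.joint w ≠ 0) :
    (M.refine w).joint w ≠ 0 := by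
  rw [joint, prod_ne_zero_iff] at hw ⊢
  intro i hi
  simp only [CM.refine]
  split_ifs
  exacts [one_ne_zero, hw i hi]

variable [∀ i, Fintype (Val i)]

theorem WF.refine (hM : M.WF) (a : Asg Val) : (M.refine a).WF where
  pa_exo := hM.pa_exo
  acyclic := hM.acyclic
  cpt_pa i w w' x h := by
    have hagree : AgreeOn (M.pa i) w a ↔ AgreeOn (M.pa i) w' a :=
      forall₂_congr fun j hj => by rw [h j hj]
    simp only [CM.refine, hM.cpt_pa i w w' x h]
    exact if_congr (and_congr_right fun _ => hagree) rfl rfl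
  cpt_nonneg i w x := by
    simp only [CM.refine]
    split_ifs
    exacts [zero_le_one, le_rfl, hM.cpt_nonneg i w x]
  cpt_sum i w := by
    simp only [CM.refine]
    split_ifs
    · exact Fintype.sum_ite_eq' _ _
    · exact hM.cpt_sum i w

end Refine

end CM

section JoinAsg

variable {ν β : Type} {Val : ν → Type} {B : β → Type}

/-- The assignment of an extended signature with values `w` on the original variables and `f`
on the new ones. -/
def joinAsg (w : Asg Val) (f : Asg B) : Asg (SumVal Val B) :=
  Sum.rec w f

theorem joinAsg_agreeOn_image_inl_iff [∀ b, Nonempty (B b)] {S : Finset ν} {w a : Asg Val}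
    {f : Asg B} : AgreeOn (S.image Sum.inl) (joinAsg w f) (liftAsg a) ↔ AgreeOn S w a :=
  forall_mem_image

variable [Fintype ν] [Fintype β] [∀ i, Fintype (Val i)] [∀ b, Fintype (B b)]

theorem sum_asg_sumVal (F : Asg (SumVal Val B) → ℝ) :
    ∑ W, F W = ∑ w : Asg Val, ∑ f : Asg B, F (joinAsg w f) := by
  let e : Asg Val × Asg B ≃ Asg (SumVal Val B) :=
    (Equiv.sumPiEquivProdPi (SumVal Val B)).symm
  rw [← e.sum_comp, Fintype.sum_prod_type]
  rfl

end JoinAsg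

namespace CM

variable {ν : Type} {Val : ν → Type}

/-- The values that `w` gives to the parents of `i`. -/
def paValues (M : CM ν Val) (i : ν) (w : Asg Val) : M.PaAsg i := fun k => w k.1

theorem paValues_eq_iff {M : CM ν Val} {i : ν} {w w' : Asg Val} :
    M.paValues i w = M.paValues i w' ↔ AgreeOn (M.pa i) w w' :=
  funext_iff.trans Subtype.forall

variable [Fintype ν] [∀ i, Fintype (Val i)] [∀ i, Nonempty (Val i)] (M : CM ν Val)

/-- The deterministic model over the original variables to which the PO-SCM reduces when the
potential outcomes are fixed to `f`. -/
def fixOutcomes (f : Asg (POB M)) : CM ν Val where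
  exo := M.exo
  pa := M.pa
  ord := M.ord
  cpt i w := M.MN.cpt (.inl i) (joinAsg w f)

/-- The probability that the potential outcome variables take the values `f`. -/
def outcomeProb (f : Asg (POB M)) : ℝ :=
  ∏ p : POI M, M.cpt p.1.1 (M.extendPa p.1.1 p.2) (f p)

variable {M}

theorem cpt_extendPa_paValues (hM : M.WF) (i : ν) (w : Asg Val) (x : Val i) :
    M.cpt i (M.extendPa i (M.paValues i w)) x = M.cpt i w x :=
  hM.cpt_pa i _ _ x fun _ hj => dif_pos hj

theorem fixOutcomes_cpt_of_mem_exo {f : Asg (POB M)} {w : Asg Val} {i : ν} (hi : i ∈ M.exo) :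
    (M.fixOutcomes f).cpt i w = M.cpt i w :=
  funext fun _ => dif_pos hi

theorem fixOutcomes_cpt_of_notMem_exo {f : Asg (POB M)} {w : Asg Val} {i : ν} (hi : i ∉ M.exo)
    (x : Val i) :
    (M.fixOutcomes f).cpt i w x = if x = f ⟨⟨i, hi⟩, M.paValues i w⟩ then 1 else 0 :=
  dif_neg hi

theorem WF.fixOutcomes (hM : M.WF) (f : Asg (POB M)) : (M.fixOutcomes f).WF where
  pa_exo := hM.pa_exo
  acyclic := hM.acyclic
  cpt_pa i w w' x h := by
    by_cases hi : i ∈ M.exo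
    · simp only [fixOutcomes_cpt_of_mem_exo hi, hM.cpt_pa i w w' x h]
    · have hpa : M.paValues i w = M.paValues i w' := paValues_eq_iff.2 h
      rw [fixOutcomes_cpt_of_notMem_exo hi, fixOutcomes_cpt_of_notMem_exo hi, hpa]
  cpt_nonneg i w x := by
    by_cases hi : i ∈ M.exo
    · simp only [fixOutcomes_cpt_of_mem_exo hi, hM.cpt_nonneg]
    · rw [fixOutcomes_cpt_of_notMem_exo hi]
      split_ifs
      exacts [zero_le_one, le_rfl]
  cpt_sum i w := by
    by_cases hi : i ∈ M.exo
    · simp only [fixOutcomes_cpt_of_mem_exo hi, hM.cpt_sum]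
    · simp only [fixOutcomes_cpt_of_notMem_exo hi]
      exact Fintype.sum_ite_eq' _ _

theorem isActualized_fixOutcomes {f : Asg (POB M)} {w : Asg Val}
    (hw : (M.fixOutcomes f).joint w ≠ 0) : (M.fixOutcomes f).IsActualized w := by
  intro i (hi : i ∉ M.exo) w' hw' x hx
  have hpa : M.paValues i w' = M.paValues i w := paValues_eq_iff.2 hw'
  have hcpt := prod_ne_zero_iff.1 hw i (mem_univ i)
  rw [fixOutcomes_cpt_of_notMem_exo hi, ite_ne_right_iff] at hcpt
  rw [fixOutcomes_cpt_of_notMem_exo hi, hpa, ← hcpt.1, if_neg hx]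

theorem prod_MN_cpt_compl_image_inl (X : Finset ν) (w : Asg Val) (f : Asg (POB M)) :
    ∏ i ∈ (X.image Sum.inl)ᶜ, M.MN.cpt i (joinAsg w f) (joinAsg w f i) =
      (∏ i ∈ Xᶜ, (M.fixOutcomes f).cpt i w (w i)) * M.outcomeProb f := by
  have hcompl : (X.image Sum.inl)ᶜ = Xᶜ.disjSum (univ : Finset (POI M)) := by
    ext (i | p) <;> simp
  rw [hcompl, prod_disjSum]
  rfl

theorem MN_pdo_joinAsg (X : Finset ν) (xv w : Asg Val) (f : Asg (POB M)) :
    M.MN.pdo (X.image Sum.inl) (liftAsg xv) (joinAsg w f) =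
      (M.fixOutcomes f).pdo X xv w * M.outcomeProb f := by
  rw [pdo_def, pdo_def, ite_mul, zero_mul, prod_MN_cpt_compl_image_inl]
  exact if_congr joinAsg_agreeOn_image_inl_iff rfl rfl

theorem MN_joint_joinAsg (w : Asg Val) (f : Asg (POB M)) :
    M.MN.joint (joinAsg w f) = (M.fixOutcomes f).joint w * M.outcomeProb f := by
  simpa [joint] using prod_MN_cpt_compl_image_inl ∅ w f

theorem joinAsg_agreeOn_MN_exo_iff {w w' : Asg Val} {f g : Asg (POB M)} :
    AgreeOn M.MN.exo (joinAsg w' g) (joinAsg w f) ↔ g = f ∧ AgreeOn M.exo w' w := by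
  rw [AgreeOn, show M.MN.exo = M.exo.image Sum.inl ∪ univ.image Sum.inr from rfl,
    forall_mem_union, forall_mem_image, forall_mem_image, and_comm, funext_iff]
  exact and_congr ⟨fun h p => h (mem_univ p), fun h p _ => h p⟩ Iff.rfl

theorem sum_MN_pdo (X : Finset ν) (xv w : Asg Val) (f : Asg (POB M))
    (P : Asg (SumVal Val (POB M)) → Prop) [DecidablePred P] :
    ∑ W, (if AgreeOn M.MN.exo W (joinAsg w f) ∧ P W then
        M.MN.pdo (X.image Sum.inl) (liftAsg xv) W else 0) =
      (∑ w', if AgreeOn M.exo w' w ∧ P (joinAsg w' f) then (M.fixOutcomes f).pdo X xv w' else 0) *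
        M.outcomeProb f := by
  rw [sum_asg_sumVal, sum_mul]
  refine sum_congr rfl fun w' _ => ?_
  rw [Fintype.sum_eq_single f fun g hg =>
    if_neg fun h => hg (joinAsg_agreeOn_MN_exo_iff.1 h.1).1]
  simp only [joinAsg_agreeOn_MN_exo_iff, true_and, MN_pdo_joinAsg, ite_mul, zero_mul]

theorem MN_cfBasic_joinAsg (X : Finset ν) (xv : Asg Val) (Y : Finset ν) (yv w : Asg Val)
    {f : Asg (POB M)} (hf : M.outcomeProb f ≠ 0) :
    M.MN.cfBasic (X.image Sum.inl) (liftAsg xv) (Y.image Sum.inl) (liftAsg yv) (joinAsg w f) =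
      (M.fixOutcomes f).cfBasic X xv Y yv w := by
  have hnum := sum_MN_pdo X xv w f fun W => AgreeOn (Y.image Sum.inl) W (liftAsg yv)
  have hden := sum_MN_pdo X xv w f fun _ => True
  simp only [joinAsg_agreeOn_image_inl_iff] at hnum
  simp only [and_true] at hden
  rw [cfBasic_def, hnum, hden, mul_div_mul_right _ _ hf]
  rfl

theorem pnProb_eq_sum_fixOutcomes (evs : List (CFEvent ν Val)) :
    M.pnProb evs = ∑ w, ∑ f : Asg (POB M),
      (evs.map fun e => (M.fixOutcomes f).cfBasic e.X e.xv e.Y e.yv w).prod *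
        ((M.fixOutcomes f).joint w * M.outcomeProb f) := by
  rw [pnProb, extProb, cfProb_def, sum_asg_sumVal]
  refine sum_congr rfl fun w _ => sum_congr rfl fun f _ => ?_
  rw [MN_joint_joinAsg, List.map_map]
  by_cases hf : M.outcomeProb f = 0
  · simp only [hf, mul_zero]
  · rw [List.map_congr_left fun e _ => MN_cfBasic_joinAsg e.X e.xv e.Y e.yv w hf]

theorem sum_prod_cpt_extendPa (hM : M.WF) {i : ν} (hi : i ∉ M.exo) (X : Finset ν)
    (w w' : Asg Val) :
    ∑ g : M.PaAsg i → Val i,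
      (if i ∈ Xᶜ then if w' i = g (M.paValues i w') then 1 else 0 else 1) *
        (if w i = g (M.paValues i w) then 1 else 0) *
        ∏ κ, M.cpt i (M.extendPa i κ) (g κ) =
      (if i ∈ Xᶜ then (M.refine w).cpt i w' (w' i) else 1) * M.cpt i w (w i) := by
  have hp (κ) : ∑ x, M.cpt i (M.extendPa i κ) x = 1 := hM.cpt_sum i _
  have hw : ∑ g : M.PaAsg i → Val i, (if w i = g (M.paValues i w) then 1 else 0) *
      ∏ κ, M.cpt i (M.extendPa i κ) (g κ) = M.cpt i w (w i) := by
    rw [sum_ite_mul_prod _ hp, cpt_extendPa_paValues hM]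
  by_cases hiX : i ∈ Xᶜ
  swap
  · simpa only [if_neg hiX, one_mul] using hw
  simp only [if_pos hiX]
  by_cases hpa : AgreeOn (M.pa i) w' w
  · rw [refine_cpt_of_agreeOn hi hpa, ← hw, mul_sum, paValues_eq_iff.2 hpa]
    refine sum_congr rfl fun g _ => ?_
    by_cases hg : w i = g (M.paValues i w)
    · simp [hg]
    · simp [hg]
  · rw [refine_cpt_of_not_agreeOn hpa,
      sum_ite_mul_ite_mul_prod _ hp fun h => hpa (paValues_eq_iff.1 h),
      cpt_extendPa_paValues hM, cpt_extendPa_paValues hM]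

theorem fixOutcomes_pdo_mul_joint {X : Finset ν} {xv w w' : Asg Val} (h : AgreeOn X w' xv)
    (f : Asg (POB M)) :
    (M.fixOutcomes f).pdo X xv w' * ((M.fixOutcomes f).joint w * M.outcomeProb f) =
      (∏ i ∈ M.exo, (if i ∈ Xᶜ then M.cpt i w' (w' i) else 1) * M.cpt i w (w i)) *
      ∏ i : {i // i ∉ M.exo},
        (if i.1 ∈ Xᶜ then if w' i = f ⟨i, M.paValues i w'⟩ then 1 else 0 else 1) *
          (if w i = f ⟨i, M.paValues i w⟩ then 1 else 0) *
          ∏ κ : M.PaAsg i, M.cpt i (M.extendPa i κ) (f ⟨i, κ⟩) := by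
  have hprob : M.outcomeProb f =
      ∏ i : {i // i ∉ M.exo}, ∏ κ : M.PaAsg i, M.cpt i (M.extendPa i κ) (f ⟨i, κ⟩) :=
    Fintype.prod_sigma _
  rw [← mul_assoc, pdo_mul_joint _ _ h, hprob,
    ← prod_mul_prod_notMem M.exo, mul_assoc, ← prod_mul_distrib]
  refine congrArg₂ (· * ·) (prod_congr rfl fun i hi => ?_) (prod_congr rfl fun i _ => ?_)
  · rw [fixOutcomes_cpt_of_mem_exo hi, fixOutcomes_cpt_of_mem_exo hi]
  · rw [fixOutcomes_cpt_of_notMem_exo i.2, fixOutcomes_cpt_of_notMem_exo i.2]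

theorem sum_fixOutcomes_pdo_mul_joint (hM : M.WF) (X : Finset ν) (xv w w' : Asg Val) :
    ∑ f : Asg (POB M), (M.fixOutcomes f).pdo X xv w' *
        ((M.fixOutcomes f).joint w * M.outcomeProb f) =
      (M.refine w).pdo X xv w' * M.joint w := by
  by_cases h : AgreeOn X w' xv
  swap
  · simp only [pdo_def, if_neg h, zero_mul, sum_const_zero]
  rw [pdo_mul_joint _ _ h, ← prod_mul_prod_notMem M.exo,
    prod_congr rfl fun i hi => by rw [refine_cpt_of_mem_exo hi],
    prod_congr rfl fun i _ => (sum_prod_cpt_extendPa hM i.2 X w w').symm,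
    ← sum_prod_sigma, mul_sum]
  exact sum_congr rfl fun f _ => fixOutcomes_pdo_mul_joint h f

theorem sum_fixOutcomes_joint (hM : M.WF) (w : Asg Val) :
    ∑ f : Asg (POB M), (M.fixOutcomes f).joint w * M.outcomeProb f = M.joint w := by
  simpa [pdo_def, agreeOn_univ_iff] using sum_fixOutcomes_pdo_mul_joint hM univ w w w

theorem sum_fixOutcomes_cfBasic_mul_joint (hM : M.WF) {X : Finset ν} (hX : Disjoint X M.exo)
    (xv : Asg Val) (Y : Finset ν) (yv w : Asg Val) :
    ∑ f, (M.fixOutcomes f).cfBasic X xv Y yv w *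
        ((M.fixOutcomes f).joint w * M.outcomeProb f) =
      (M.refine w).cfBasic X xv Y yv w * M.joint w := by
  have hfix (f : Asg (POB M)) :
      ∑ w', (if AgreeOn M.exo w' w then (M.fixOutcomes f).pdo X xv w' else 0) =
        ∏ i ∈ M.exo, M.cpt i w (w i) :=
    (sum_pdo_agreeOn_exo (hM.fixOutcomes f) hX xv w).trans <|
      prod_congr rfl fun i hi => by rw [fixOutcomes_cpt_of_mem_exo hi]
  have hrefine :
      ∑ w', (if AgreeOn M.exo w' w then (M.refine w).pdo X xv w' else 0) =
        ∏ i ∈ M.exo, M.cpt i w (w i) :=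
    (sum_pdo_agreeOn_exo (hM.refine w) hX xv w).trans <|
      prod_congr rfl fun i hi => by rw [refine_cpt_of_mem_exo hi]
  simp only [cfBasic_def, show ∀ f, (M.fixOutcomes f).exo = M.exo from fun _ => rfl,
    show (M.refine w).exo = M.exo from rfl, hfix, hrefine, div_mul_eq_mul_div, ← sum_div,
    sum_mul, ite_mul, zero_mul]
  rw [sum_comm]
  congr! 3 with w'
  split_ifs
  · exact sum_fixOutcomes_pdo_mul_joint hM X xv w w'
  · exact sum_const_zero

theorem sum_fixOutcomes_mul_prod_cfBasic (hM : M.WF) {w : Asg Val}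
    {evs : List (CFEvent ν Val)} (hX : ∀ e ∈ evs, AgreeOn e.X w e.xv)
    {F : Asg (POB M) → ℝ} {c : ℝ}
    (hF : ∑ f, F f * ((M.fixOutcomes f).joint w * M.outcomeProb f) = c * M.joint w) :
    ∑ f, (F f * (evs.map fun e => (M.fixOutcomes f).cfBasic e.X e.xv e.Y e.yv w).prod) *
        ((M.fixOutcomes f).joint w * M.outcomeProb f) =
      (c * (evs.map fun e => (M.refine w).cfBasic e.X e.xv e.Y e.yv w).prod) * M.joint w := by
  set I : ℝ := (evs.map fun e => if AgreeOn e.Y w e.yv then 1 else 0).prod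
  have hfix (f : Asg (POB M)) :
      (evs.map fun e => (M.fixOutcomes f).cfBasic e.X e.xv e.Y e.yv w).prod *
        (M.fixOutcomes f).joint w = I * (M.fixOutcomes f).joint w := by
    by_cases hw : (M.fixOutcomes f).joint w = 0
    · simp only [hw, mul_zero]
    · rw [(isActualized_fixOutcomes hw).prod_cfBasic_eq (hM.fixOutcomes f) hw hX]
  have hrefine : (evs.map fun e => (M.refine w).cfBasic e.X e.xv e.Y e.yv w).prod *
      M.joint w = I * M.joint w := by
    by_cases hw : M.joint w = 0
    · simp only [hw, mul_zero]
    · rw [(isActualized_refine M w).prod_cfBasic_eq (hM.refine w) (joint_refine_ne_zero hw) hX]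
  calc
    _ = ∑ f, I * (F f * ((M.fixOutcomes f).joint w * M.outcomeProb f)) :=
      sum_congr rfl fun f _ => by linear_combination F f * M.outcomeProb f * hfix f
    _ = I * (c * M.joint w) := by rw [← mul_sum, hF]
    _ = _ := by linear_combination -c * hrefine

theorem sum_fixOutcomes_prod_cfBasic_mul_joint (hM : M.WF) {w : Asg Val}
    {evs : List (CFEvent ν Val)}
    (hexo : ∀ e ∈ evs, Disjoint e.X M.exo)
    (h : evs.Pairwise fun e e' => AgreeOn e.X w e.xv ∨ AgreeOn e'.X w e'.xv) :
    ∑ f, (evs.map fun e => (M.fixOutcomes f).cfBasic e.X e.xv e.Y e.yv w).prod *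
        ((M.fixOutcomes f).joint w * M.outcomeProb f) =
      (evs.map fun e => (M.refine w).cfBasic e.X e.xv e.Y e.yv w).prod * M.joint w := by
  by_cases hall : ∀ e ∈ evs, AgreeOn e.X w e.xv
  · simpa only [one_mul] using
      sum_fixOutcomes_mul_prod_cfBasic hM hall (F := fun _ => 1) (c := 1)
        (by simpa only [one_mul] using sum_fixOutcomes_joint hM w)
  push Not at hall
  obtain ⟨e, he, heX⟩ := hall
  obtain ⟨l₁, l₂, rfl⟩ := List.append_of_mem he
  have hrest : ∀ e' ∈ l₁ ++ l₂, AgreeOn e'.X w e'.xv := by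
    have hpair := List.pairwise_append.1 h
    have hcons := List.pairwise_cons.1 hpair.2.1
    exact fun e' he' => (List.mem_append.1 he').elim
      (fun h₁ => (hpair.2.2 e' h₁ e List.mem_cons_self).resolve_right heX)
      fun h₂ => (hcons.1 e' h₂).resolve_left heX
  have hprod (G : CFEvent ν Val → ℝ) :
      ((l₁ ++ e :: l₂).map G).prod = G e * ((l₁ ++ l₂).map G).prod :=
    (List.perm_middle.map G).prod_eq
  simp only [hprod]
  exact sum_fixOutcomes_mul_prod_cfBasic hM hrest
    (sum_fixOutcomes_cfBasic_mul_joint hM (hexo e he) e.xv e.Y e.yv w)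

end CM

theorem PNS_B_eq_PNS_N_general {ν : Type} {Val : ν → Type} [Fintype ν] [∀ i, Fintype (Val i)]
    [∀ i, Nonempty (Val i)] (M : CM ν Val) (hM : M.WF) (evs : List (CFEvent ν Val))
    (hexo : ∀ e ∈ evs, Disjoint e.X M.exo)
    (h : evs.Pairwise fun e e' => ∀ w, AgreeOn e.X w e.xv ∨ AgreeOn e'.X w e'.xv) :
    M.pbProb evs = M.pnProb evs := by
  rw [CM.pnProb_eq_sum_fixOutcomes]
  exact sum_congr rfl fun w _ =>
    (CM.sum_fixOutcomes_prod_cfBasic_mul_joint hM hexo (h.imp fun hee' => hee' w)).symm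

/-- **Proposition 3 (PNS).** Given a causal model `M` and any two binary endogenous
variables `X, Y ∈ V` (with two values, `0` and `1`): the Probability of Necessity and
Sufficiency computed via the B-semantics equals the one computed in the PO-SCM, i.e.
`PNS^B = P^B((Y=1)_{X←1}, (Y=0)_{X←0}) = P^N((Y=1)_{X←1}, (Y=0)_{X←0}) = PNS^N`. -/
theorem PNS_B_eq_PNS_N
    {ν : Type} {Val : ν → Type} [Fintype ν] [∀ i, Fintype (Val i)] [∀ i, Nonempty (Val i)]
    (M : CM ν Val) (hM : M.WF)
    (X Y : ν) (hX : X ∉ M.exo) (hY : Y ∉ M.exo) (hXY : X ≠ Y)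
    (x0 x1 : Val X) (hx : x0 ≠ x1) (hxbin : ∀ v : Val X, v = x0 ∨ v = x1)
    (y0 y1 : Val Y) (hy : y0 ≠ y1) (hybin : ∀ v : Val Y, v = y0 ∨ v = y1) :
    M.pbProb [⟨{X}, Function.update (dfltAsg Val) X x1, {Y}, Function.update (dfltAsg Val) Y y1⟩,
              ⟨{X}, Function.update (dfltAsg Val) X x0, {Y}, Function.update (dfltAsg Val) Y y0⟩]
    = M.pnProb [⟨{X}, Function.update (dfltAsg Val) X x1, {Y}, Function.update (dfltAsg Val) Y y1⟩,
                ⟨{X}, Function.update (dfltAsg Val) X x0, {Y}, Function.update (dfltAsg Val) Y y0⟩] := by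
  refine PNS_B_eq_PNS_N_general M hM _ (by simp [hX]) (List.pairwise_pair.2 fun w => ?_)
  simpa [AgreeOn] using (hxbin (w X)).symm

end
end

section
/- For every causal model M and all counterfactual events y_x, …, z_w with Y, X, …, Z, W ⊆ V: the probability of the complex counterfactual computed in the GH-SCM equals the one computed in the PO-SCM: P^GH(y_x, …, z_w) = P^N(y_x, …, z_w). -/
/-!
A response function `f_X : R(Pa_X) → R(X)` is the same thing as one value for each potential
outcome variable `X_{pa_X}`, so currying identifies the added variables of the GH-SCM with those of
the PO-SCM. Under it the equation `X = f_X(Pa_X)` becomes `X = X_{pa_X}`, and the product formula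
defining the GH distribution says that `f_X` has the probability of the corresponding family of
independent potential outcomes. A weight-preserving bijection of the added exogenous variables
preserves every counterfactual about the original variables.
-/

open Finset

noncomputable section

attribute [local instance] Classical.propDecidable

section DisjSum

-- Implicit rather than instance-implicit: the instances in `liftCFEvent` and `CM.pdo` differ.
variable {α β : Type*} {_ : DecidableEq (α ⊕ β)}

theorem image_inl_eq_disjSum_empty (s : Finset α) :
    s.image (Sum.inl : α → α ⊕ β) = s.disjSum ∅ := by
  rw [Finset.disjSum_empty, Finset.map_eq_image]
  rfl

theorem compl_disjSum [Fintype α] [Fintype β] [DecidableEq α] [DecidableEq β] (s : Finset α)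
    (t : Finset β) : (s.disjSum t)ᶜ = sᶜ.disjSum tᶜ := by
  ext i
  cases i <;> simp

end DisjSum

namespace CM

variable {ν ν' : Type} {Val : ν → Type} {Val' : ν' → Type} [Fintype ν] [Fintype ν']
  {M : CM ν Val} {M' : CM ν' Val'} {X : Finset ν} {X' : Finset ν'} {xv : Asg Val} {xv' : Asg Val'}

theorem pdo_congr {w : Asg Val} {w' : Asg Val'}
    (hX : (∀ i ∈ X', w' i = xv' i) ↔ ∀ i ∈ X, w i = xv i)
    (hprod : ∏ i ∈ X'ᶜ, M'.cpt i w' (w' i) = ∏ i ∈ Xᶜ, M.cpt i w (w i)) :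
    M'.pdo X' xv' w' = M.pdo X xv w :=
  if_congr hX hprod rfl

theorem cfBasic_eq_of_equiv [∀ i, Fintype (Val i)] [∀ i, Fintype (Val' i)] {Y : Finset ν}
    {Y' : Finset ν'} {yv : Asg Val} {yv' : Asg Val'} (E : Asg Val ≃ Asg Val') (w : Asg Val)
    (hexo : ∀ v, (∀ i ∈ M'.exo, E v i = E w i) ↔ ∀ i ∈ M.exo, v i = w i)
    (hpdo : ∀ v, M'.pdo X' xv' (E v) = M.pdo X xv v)
    (hY : ∀ v, (∀ i ∈ Y', E v i = yv' i) ↔ ∀ i ∈ Y, v i = yv i) :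
    M'.cfBasic X' xv' Y' yv' (E w) = M.cfBasic X xv Y yv w := by
  unfold cfBasic
  congr 1
  · refine (Fintype.sum_equiv E _ _ fun v => ?_).symm
    exact if_congr ((hexo v).and (hY v)).symm (hpdo v).symm rfl
  · refine (Fintype.sum_equiv E _ _ fun v => ?_).symm
    exact if_congr (hexo v).symm (hpdo v).symm rfl

theorem cfProb_map_eq_of_equiv [∀ i, Fintype (Val i)] [∀ i, Fintype (Val' i)] {ι : Type*}
    {f : ι → CFEvent ν Val} {f' : ι → CFEvent ν' Val'} (E : Asg Val ≃ Asg Val')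
    (hjoint : ∀ w, M'.joint (E w) = M.joint w)
    (hcf : ∀ k w, M'.cfBasic (f' k).X (f' k).xv (f' k).Y (f' k).yv (E w) =
      M.cfBasic (f k).X (f k).xv (f k).Y (f k).yv w) (l : List ι) :
    M'.cfProb (l.map f') = M.cfProb (l.map f) := by
  refine (Fintype.sum_equiv E _ _ fun w => ?_).symm
  simp only [List.map_map, Function.comp_def, hjoint, hcf]

end CM

section NoiseExtension

variable {ν β γ : Type} {Val : ν → Type} {B : β → Type} {C : γ → Type}

/-- The bijection between the worlds of two extended signatures that keeps the original variables
and acts on the added ones by `e`. -/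
def extendEquiv (e : Asg B ≃ Asg C) : Asg (SumVal Val B) ≃ Asg (SumVal Val C) :=
  (Equiv.sumPiEquivProdPi (SumVal Val B)).trans <|
    ((Equiv.refl (Asg Val)).prodCongr e).trans (Equiv.sumPiEquivProdPi (SumVal Val C)).symm

theorem forall_mem_disjSum_extendEquiv_iff [∀ b, Nonempty (B b)] [∀ c, Nonempty (C c)]
    (e : Asg B ≃ Asg C) (s : Finset ν) (v : Asg Val) (w : Asg (SumVal Val B)) :
    (∀ i ∈ s.disjSum ∅, extendEquiv e w i = liftAsg v i) ↔
      ∀ i ∈ s.disjSum ∅, w i = liftAsg v i := by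
  simp only [Sum.forall, Finset.inl_mem_disjSum, Finset.inr_mem_disjSum, Finset.notMem_empty,
    false_imp_iff, implies_true, and_true]
  rfl

/-- `e` is an isomorphism between two models that extend the same signature by exogenous noise
variables. Only the joint weights of the noise are matched, since `e` need not pair the noise
variables one by one. -/
structure IsNoiseIso [Fintype β] [Fintype γ] (N : CM (ν ⊕ β) (SumVal Val B))
    (N' : CM (ν ⊕ γ) (SumVal Val C)) (e : Asg B ≃ Asg C) : Prop where
  inl_mem_exo_iff : ∀ j, Sum.inl j ∈ N'.exo ↔ Sum.inl j ∈ N.exo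
  inr_mem_exo_left : ∀ b, Sum.inr b ∈ N.exo
  inr_mem_exo_right : ∀ c, Sum.inr c ∈ N'.exo
  cpt_inl : ∀ (w : Asg (SumVal Val B)) (j : ν) (x : Val j),
    N'.cpt (Sum.inl j) (extendEquiv e w) x = N.cpt (Sum.inl j) w x
  prod_cpt_inr : ∀ w : Asg (SumVal Val B),
    ∏ c, N'.cpt (Sum.inr c) (extendEquiv e w) (extendEquiv e w (Sum.inr c)) =
      ∏ b, N.cpt (Sum.inr b) w (w (Sum.inr b))

namespace IsNoiseIso

variable [Fintype β] [Fintype γ] {N : CM (ν ⊕ β) (SumVal Val B)}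
  {N' : CM (ν ⊕ γ) (SumVal Val C)} {e : Asg B ≃ Asg C}

theorem forall_mem_exo_eq_iff (h : IsNoiseIso N N' e) (w w' : Asg (SumVal Val B)) :
    (∀ i ∈ N'.exo, extendEquiv e w' i = extendEquiv e w i) ↔ ∀ i ∈ N.exo, w' i = w i := by
  have noise_eq_iff : (∀ c, extendEquiv e w' (Sum.inr c) = extendEquiv e w (Sum.inr c)) ↔
      ∀ b, w' (Sum.inr b) = w (Sum.inr b) := by
    rw [← funext_iff, ← funext_iff]
    exact e.injective.eq_iff
  simp only [Sum.forall, h.inl_mem_exo_iff, h.inr_mem_exo_left, h.inr_mem_exo_right, true_imp_iff,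
    noise_eq_iff]
  rfl

theorem joint_eq [Fintype ν] (h : IsNoiseIso N N' e) (w : Asg (SumVal Val B)) :
    N'.joint (extendEquiv e w) = N.joint w := by
  simp only [CM.joint, Fintype.prod_sum_type, h.prod_cpt_inr]
  exact congrArg (· * _) (Finset.prod_congr rfl fun j _ => h.cpt_inl w j _)

theorem pdo_disjSum_eq [Fintype ν] [∀ b, Nonempty (B b)] [∀ c, Nonempty (C c)]
    (h : IsNoiseIso N N' e) (X : Finset ν) (xv : Asg Val) (w : Asg (SumVal Val B)) :
    N'.pdo (X.disjSum ∅) (liftAsg xv) (extendEquiv e w) =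
      N.pdo (X.disjSum ∅) (liftAsg xv) w := by
  refine CM.pdo_congr (forall_mem_disjSum_extendEquiv_iff e X xv w) ?_
  rw [compl_disjSum, compl_disjSum, Finset.prod_disjSum, Finset.prod_disjSum, Finset.compl_empty,
    Finset.compl_empty, h.prod_cpt_inr]
  exact congrArg (· * _) (Finset.prod_congr rfl fun j _ => h.cpt_inl w j _)

theorem extProb_eq [Fintype ν] [∀ i, Fintype (Val i)] [∀ b, Fintype (B b)]
    [∀ c, Fintype (C c)] [∀ b, Nonempty (B b)] [∀ c, Nonempty (C c)]
    (h : IsNoiseIso N N' e) (evs : List (CFEvent ν Val)) :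
    extProb N' evs = extProb N evs := by
  refine CM.cfProb_map_eq_of_equiv (extendEquiv e) h.joint_eq (fun ev w => ?_) evs
  simp only [liftCFEvent, image_inl_eq_disjSum_empty]
  exact CM.cfBasic_eq_of_equiv (extendEquiv e) w (h.forall_mem_exo_eq_iff w)
    (h.pdo_disjSum_eq ev.X ev.xv) (forall_mem_disjSum_extendEquiv_iff e ev.Y ev.yv)

end IsNoiseIso

end NoiseExtension

namespace CM

variable {ν : Type} {Val : ν → Type}

/-- A family of response functions, read as a family of potential outcomes. -/
def responseEquivPotentialOutcome (M : CM ν Val) : Asg (RB M) ≃ Asg (POB M) :=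
  (Equiv.piCurry fun (i : {i : ν // i ∉ M.exo}) (_ : M.PaAsg i.1) => Val i.1).symm

variable [Fintype ν] [∀ i, Fintype (Val i)] [∀ i, Nonempty (Val i)]

theorem isNoiseIso_canonSCM_qGH_MN (M : CM ν Val) :
    IsNoiseIso (M.canonSCM M.qGH) M.MN M.responseEquivPotentialOutcome where
  inl_mem_exo_iff _ := by simp [MN, canonSCM]
  inr_mem_exo_left _ := by simp [canonSCM]
  inr_mem_exo_right _ := by simp [MN]
  cpt_inl _ _ _ := rfl
  prod_cpt_inr w := Fintype.prod_sigma fun p : POI M =>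
    M.cpt p.1.1 (M.extendPa p.1.1 p.2) (w (Sum.inr p.1) p.2)

end CM

theorem ghProb_eq_pnProb_general
    {ν : Type} {Val : ν → Type} [Fintype ν] [∀ i, Fintype (Val i)] [∀ i, Nonempty (Val i)]
    (M : CM ν Val) (evs : List (CFEvent ν Val)) :
    extProb (M.canonSCM M.qGH) evs = M.pnProb evs :=
  (M.isNoiseIso_canonSCM_qGH_MN.extProb_eq evs).symm

/-- **Proposition 4.** Given a causal model `M`, for all counterfactual events
`y_x, …, z_w` with `Y, X, …, Z, W ⊆ V`: the probability of the complex counterfactual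
computed in the GH-SCM equals the one computed in the PO-SCM:
`P^GH(y_x, …, z_w) = P^N(y_x, …, z_w)`. -/
theorem ghProb_eq_pnProb
    {ν : Type} {Val : ν → Type} [Fintype ν] [∀ i, Fintype (Val i)] [∀ i, Nonempty (Val i)]
    (M : CM ν Val) (hM : M.WF)
    (evs : List (CFEvent ν Val))
    (hevs : ∀ e ∈ evs, (∀ i ∈ e.X, i ∉ M.exo) ∧ (∀ i ∈ e.Y, i ∉ M.exo)) :
    extProb (M.canonSCM M.qGH) evs = M.pnProb evs :=
  ghProb_eq_pnProb_general M evs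

end
end

section
/- Every canonical SCM M' for a causal model M induces M: for every X ⊆ V (including X = ∅) and every x ∈ R(X), the interventional distribution of M' over the endogenous variables equals that of M, i.e., P'_{do(X=x)}(V = v) = P_{do(X=x)}(V = v) for all v ∈ R(V). -/
/-!
Fix values `a` of the original variables and sum over the values `r` of the response variables.
In the canonical SCM under `do(X = x)`, the structural equation of an endogenous `i ∉ X` contributes
the indicator `[a i = r i (a|pa i)]`, which involves only the response variable of `i`. The response
variables being independent, the sum over `r` factorizes: the response variable of `i ∉ X`
contributes the probability of the functions sending `a|pa i` to `a i`, which is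
`P_M(a i | a|pa i)`, and that of `i ∈ X` contributes its total mass `1`. So the marginal of the
intervened canonical SCM on the original variables, exogenous ones included, is the truncated
factorization of `M`.
-/

open Finset

noncomputable section

attribute [local instance] Classical.propDecidable

lemma sum_pi_prod_mul_prod {ι R : Type*} {κ : ι → Type*} [Fintype ι] [∀ i, Fintype (κ i)]
    [CommSemiring R] (T : Finset ι) (g q : ∀ i, κ i → R) (hq : ∀ i ∉ T, ∑ x, q i x = 1) :
    ∑ r : ∀ i, κ i, (∏ i ∈ T, g i (r i)) * ∏ i, q i (r i) = ∏ i ∈ T, ∑ x, g i x * q i x := by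
  calc ∑ r : ∀ i, κ i, (∏ i ∈ T, g i (r i)) * ∏ i, q i (r i)
      = ∑ r : ∀ i, κ i, ∏ i, (if i ∈ T then g i (r i) else 1) * q i (r i) := by
        simp only [prod_mul_distrib, Fintype.prod_ite_mem]
    _ = ∏ i, ∑ x, (if i ∈ T then g i x else 1) * q i x :=
        (Fintype.prod_sum fun i x => (if i ∈ T then g i x else 1) * q i x).symm
    _ = ∏ i, if i ∈ T then ∑ x, g i x * q i x else 1 := by
        refine prod_congr rfl fun i _ => ?_
        split_ifs with hi
        · rfl
        · simp only [one_mul, hq i hi]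
    _ = ∏ i ∈ T, ∑ x, g i x * q i x := Fintype.prod_ite_mem _ _

lemma prod_filter_mem_mul_prod_subtype_notMem {ι R : Type*} [CommMonoid R] (S E : Finset ι)
    (f : ι → R) :
    (∏ i ∈ S with i ∈ E, f i) * ∏ i ∈ S.subtype (· ∉ E), f i = ∏ i ∈ S, f i := by
  rw [prod_subtype_eq_prod_filter, prod_filter_mul_prod_filter_not]

lemma liftAsg_inl {ν β : Type} {Val : ν → Type} {B : β → Type} [∀ b, Nonempty (B b)]
    (xv : Asg Val) (i : ν) : (liftAsg xv : Asg (SumVal Val B)) (.inl i) = xv i := rfl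

namespace Asg

variable {ν β : Type} {Val : ν → Type} {B : β → Type}

/-- The assignment on the extended signature `ν ⊕ β` with original part `a` and added part `r`. -/
def sumElim (a : Asg Val) (r : Asg B) : Asg (SumVal Val B)
  | .inl i => a i
  | .inr b => r b

lemma sumElim_inl (a : Asg Val) (r : Asg B) (i : ν) : a.sumElim r (.inl i) = a i := rfl

lemma sumElim_inr (a : Asg Val) (r : Asg B) (b : β) : a.sumElim r (.inr b) = r b := rfl

lemma sum_eq_sum_sumElim {R : Type*} [AddCommMonoid R] [Fintype ν] [Fintype β]
    [∀ i, Fintype (Val i)] [∀ b, Fintype (B b)] (F : Asg (SumVal Val B) → R) :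
    ∑ w, F w = ∑ a : Asg Val, ∑ r : Asg B, F (a.sumElim r) := by
  rw [← Fintype.sum_prod_type']
  exact Fintype.sum_equiv (Equiv.sumPiEquivProdPi (SumVal Val B)) _ _ fun w =>
    congrArg F (funext fun i => by cases i <;> rfl)

end Asg

namespace CM

variable {ν : Type} {Val : ν → Type} [Fintype ν] {M : CM ν Val}

lemma pdo_image_inl_sumElim {β : Type} {B : β → Type} [Fintype β] [∀ b, Nonempty (B b)]
    (N : CM (ν ⊕ β) (SumVal Val B)) (X : Finset ν) (xv a : Asg Val) (r : Asg B) :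
    N.pdo (X.image Sum.inl) (liftAsg xv) (a.sumElim r) =
      if ∀ i ∈ X, a i = xv i then
        (∏ i ∈ Xᶜ, N.cpt (.inl i) (a.sumElim r) (a i)) * ∏ b, N.cpt (.inr b) (a.sumElim r) (r b)
      else 0 := by
  simp only [pdo, forall_mem_image, prod_sum_eq_prod_toLeft_mul_prod_toRight, Asg.sumElim_inl,
    Asg.sumElim_inr, liftAsg_inl]
  -- The complement of `X.image inl` has left part `Xᶜ` and right part `univ`.
  congr! 3 <;> ext <;> simp

lemma canonSCM_cpt_inl_of_mem (q : (p : RVI M) → RType M p.1 → ℝ) {i : ν}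
    (hi : i ∈ M.exo) (a : Asg Val) (r : Asg (RB M)) (x : Val i) :
    (M.canonSCM q).cpt (.inl i) (a.sumElim r) x = M.cpt i a x :=
  dif_pos hi

lemma canonSCM_cpt_inl_of_notMem (q : (p : RVI M) → RType M p.1 → ℝ) {i : ν}
    (hi : i ∉ M.exo) (a : Asg Val) (r : Asg (RB M)) (x : Val i) :
    (M.canonSCM q).cpt (.inl i) (a.sumElim r) x = if x = r ⟨i, hi⟩ fun j => a j then 1 else 0 :=
  dif_neg hi

lemma prod_canonSCM_cpt_inl (q : (p : RVI M) → RType M p.1 → ℝ) (S : Finset ν)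
    (a : Asg Val) (r : Asg (RB M)) :
    ∏ i ∈ S, (M.canonSCM q).cpt (.inl i) (a.sumElim r) (a i) =
      (∏ i ∈ S with i ∈ M.exo, M.cpt i a (a i)) *
        ∏ p ∈ S.subtype (· ∉ M.exo), if a p = r p fun j => a j then 1 else 0 := by
  rw [← prod_filter_mem_mul_prod_subtype_notMem S M.exo]
  congr 1
  · exact prod_congr rfl fun i hi => canonSCM_cpt_inl_of_mem q (mem_filter.1 hi).2 a r (a i)
  · exact prod_congr rfl fun p _ => canonSCM_cpt_inl_of_notMem q p.2 a r (a p)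

variable [∀ i, Fintype (Val i)] [∀ i, Nonempty (Val i)]

lemma WF.cpt_extendPa (hM : M.WF) (i : ν) (a : Asg Val) (x : Val i) :
    M.cpt i (M.extendPa i fun j => a j) x = M.cpt i a x :=
  hM.cpt_pa i _ _ x fun j hj => by simp only [extendPa, hj, ↓reduceDIte]

lemma IsCanonicalDist.sum_indicator_mul (hM : M.WF)
    {q : (p : RVI M) → RType M p.1 → ℝ} (hq : M.IsCanonicalDist q)
    (p : RVI M) (a : Asg Val) (x : Val p.1) :
    ∑ f : RType M p.1, (if x = f fun j => a j then 1 else 0) * q p f = M.cpt p.1 a x := by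
  rw [← hM.cpt_extendPa, hq.2.2 p (fun j => a j) x, sum_filter]
  simp only [ite_mul, one_mul, zero_mul, eq_comm]

lemma IsCanonicalDist.sum_prod_indicator_mul_prod (hM : M.WF)
    {q : (p : RVI M) → RType M p.1 → ℝ} (hq : M.IsCanonicalDist q)
    (T : Finset (RVI M)) (a : Asg Val) :
    ∑ r : Asg (RB M), (∏ p ∈ T, if a p.1 = r p fun j => a j then 1 else 0) * ∏ p, q p (r p) =
      ∏ p ∈ T, M.cpt p.1 a (a p.1) :=
  (sum_pi_prod_mul_prod (κ := RB M) T (fun p f => if a p.1 = f fun j => a j then 1 else 0) q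
    fun p _ => hq.2.1 p).trans <|
      prod_congr rfl fun p _ => hq.sum_indicator_mul hM p a (a p.1)

lemma sum_canonSCM_pdo_sumElim (hM : M.WF) {q : (p : RVI M) → RType M p.1 → ℝ}
    (hq : M.IsCanonicalDist q) (X : Finset ν) (xv a : Asg Val) :
    ∑ r : Asg (RB M), (M.canonSCM q).pdo (X.image Sum.inl) (liftAsg xv) (a.sumElim r) =
      M.pdo X xv a := by
  simp only [pdo_image_inl_sumElim, prod_canonSCM_cpt_inl, mul_assoc]
  rw [sum_ite_irrel, ← mul_sum, sum_const_zero, pdo,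
    ← prod_filter_mem_mul_prod_subtype_notMem Xᶜ M.exo]
  congr 2
  exact hq.sum_prod_indicator_mul_prod hM _ a

end CM

theorem canonicalSCM_induces_general
    {ν : Type} {Val : ν → Type} [Fintype ν] [∀ i, Fintype (Val i)] [∀ i, Nonempty (Val i)]
    (M : CM ν Val) (hM : M.WF)
    (q : (p : CM.RVI M) → CM.RType M p.1 → ℝ) (hq : M.IsCanonicalDist q)
    (X : Finset ν) (xv : Asg Val) (E : Asg Val → Prop) :
    (∑ w : Asg (SumVal Val (CM.RB M)),
        if E fun i => w (Sum.inl i) then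
          (M.canonSCM q).pdo (X.image Sum.inl) (liftAsg xv) w
        else 0)
    = ∑ a : Asg Val, if E a then M.pdo X xv a else 0 := by
  rw [Asg.sum_eq_sum_sumElim]
  refine sum_congr rfl fun a _ => (sum_ite_irrel (E a) univ _ _).trans ?_
  rw [sum_const_zero, CM.sum_canonSCM_pdo_sumElim hM hq]

/-- Every canonical SCM `M'` for a causal model `M` induces `M`: for every `X ⊆ V`
(including `X = ∅`) and every `x ∈ R(X)`, the interventional distribution of `M'` over
the endogenous variables equals that of `M`, i.e.
`P'_{do(X=x)}(V = v) = P_{do(X=x)}(V = v)` for all `v ∈ R(V)`. -/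
theorem canonicalSCM_induces
    {ν : Type} {Val : ν → Type} [Fintype ν] [∀ i, Fintype (Val i)] [∀ i, Nonempty (Val i)]
    (M : CM ν Val) (hM : M.WF)
    (q : (p : CM.RVI M) → CM.RType M p.1 → ℝ) (hq : M.IsCanonicalDist q)
    (X : Finset ν) (hX : ∀ i ∈ X, i ∉ M.exo) (xv : Asg Val) (v : Asg Val) :
    (∑ w : Asg (SumVal Val (CM.RB M)),
        if ∀ i : ν, i ∉ M.exo → w (Sum.inl i) = v i then
          (M.canonSCM q).pdo (X.image Sum.inl) (liftAsg xv) w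
        else 0)
    = ∑ w : Asg Val, if ∀ i : ν, i ∉ M.exo → w i = v i then M.pdo X xv w else 0 := by
  -- Only the `Decidable` instances of the event `V = v` differ.
  convert canonicalSCM_induces_general M hM q hq X xv fun a => ∀ i : ν, i ∉ M.exo → a i = v i
    using 3
  rfl

end
end

section
/- In the PO-SCM M^N of a causal model M, for every (u, v) ∈ R(U ∪ V) with P_M(u, v) > 0, every X ⊆ V and every v* ∈ R(V) whose restriction to X equals the intervention values x*, the probability of the basic counterfactual factorizes as: P^N(V = v*_{X←x*} | U = u, V = v) = ∏_{Y ∈ V∖X with pa_Y = pa_Y*} 1{y* = y} · ∏_{Y ∈ V∖X with pa_Y ≠ pa_Y*} P_M(Y = y* | Pa_Y = pa_Y*), where for each Y, (y, pa_Y) are the values of Y and its parents read off from (u, v) and (y*, pa_Y*) are those read off from (u, v*). -/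
/-!
Let `(u, v)` be the actual world. Summing out variables one at a time, children before parents,
shows that a truncated factorization has total mass one. Hence, given all exogenous variables, a
counterfactual fixing every endogenous variable has as its probability the product of the
conditional probability tables of the variables that are not intervened on. In `M^N` these tables
are point masses: the product is the indicator that `v*` solves the equations `Y = Y_{pa_Y}` of all
`Y ∈ V ∖ X`.

Conditioning `M^N` on `(u, v)` forces the potential outcome `Y_{pa_Y}` at the actual parent values
to equal `y` and leaves the potential outcomes independent, the other ones with their original
distributions. So each potential outcome `Y_{pa}` is now distributed as `Y` given `Pa_Y = pa` in
the actualized refinement `M^{(u,v)}`. Since `v*` solves the equations iff `Y_{pa_Y*} = y*` for all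
`Y ∈ V ∖ X`, and these are distinct potential outcomes, the probability sought is the product of
the tables of `M^{(u,v)}` at `v*`.
-/

open Finset

noncomputable section

attribute [local instance] Classical.propDecidable

/-- The assignment on `ν ⊕ β` that is `c` on `ν` and `n` on `β`: the world of a model with
added variables `β` in which the original variables take the values `c`. -/
def sumAsg {ν β : Type} {Val : ν → Type} {B : β → Type} (c : Asg Val) (n : Asg B) :
    Asg (SumVal Val B)
  | .inl i => c i
  | .inr p => n p

theorem sum_filter_eqOn_prod_eq_prod {ι R : Type*} {α : ι → Type*} [Fintype ι] [∀ i, Fintype (α i)]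
    [CommSemiring R] (q : (i : ι) → α i → R) (S : Finset ι) (hq : ∀ i ∉ S, ∑ x, q i x = 1)
    (y : (i : ι) → α i) :
    ∑ n : (i : ι) → α i with ∀ i ∈ S, n i = y i, ∏ i, q i (n i) = ∏ i ∈ S, q i (y i) := by
  have cylinder : ({n | ∀ i ∈ S, n i = y i} : Finset ((i : ι) → α i)) =
      Fintype.piFinset fun i => if i ∈ S then {y i} else univ := by
    ext n
    simp only [mem_filter_univ, Fintype.mem_piFinset]
    refine forall_congr' fun i => ?_
    by_cases hi : i ∈ S <;> simp [hi]
  rw [cylinder, ← prod_univ_sum, ← Fintype.prod_ite_mem S]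
  refine prod_congr rfl fun i _ => ?_
  by_cases hi : i ∈ S
  · simp only [hi, if_true, sum_singleton]
  · simp only [hi, if_false, hq i hi]

theorem sum_filter_eqOn_compl_insert {ι R : Type*} {α : ι → Type*} [Fintype ι]
    [∀ i, Fintype (α i)] [AddCommMonoid R] {m : ι} {S : Finset ι} (hm : m ∉ S)
    (w₀ : (i : ι) → α i) (F : ((i : ι) → α i) → R) :
    ∑ w : (i : ι) → α i with ∀ i ∉ insert m S, w i = w₀ i, F w =
      ∑ w : (i : ι) → α i with ∀ i ∉ S, w i = w₀ i, ∑ x, F (Function.update w m x) := by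
  rw [← sum_product']
  refine sum_nbij' (fun w => (Function.update w m (w₀ m), w m))
    (fun v => Function.update v.1 m v.2) ?_ ?_ ?_ ?_ ?_
  · intro w hw
    simp only [mem_filter_univ, mem_insert, not_or, mem_product, mem_univ, and_true] at hw ⊢
    intro i hi
    rcases eq_or_ne i m with rfl | him
    · exact Function.update_self ..
    · rw [Function.update_of_ne him, hw i ⟨him, hi⟩]
  · intro v hv
    simp only [mem_filter_univ, mem_insert, not_or, mem_product, mem_univ, and_true] at hv ⊢
    intro i hi
    rw [Function.update_of_ne hi.1, hv i hi.2]
  · intro w _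
    simp only [Function.update_idem, Function.update_eq_self]
  · intro v hv
    have hvm : v.1 m = w₀ m := (mem_filter_univ _).1 (mem_product.1 hv).1 m hm
    simp only [Function.update_idem, Function.update_self, ← hvm, Function.update_eq_self]
  · intro w _
    simp only [Function.update_idem, Function.update_eq_self]

theorem extBasicCond_eq_sum_div_sum {ν β : Type} {Val : ν → Type} {B : β → Type}
    [Fintype ν] [Fintype β] [∀ i, Fintype (Val i)] [∀ b, Fintype (B b)]
    [∀ i, Nonempty (Val i)] [∀ b, Nonempty (B b)]
    (N : CM (ν ⊕ β) (SumVal Val B)) (a : Asg Val)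
    (X : Finset ν) (xv : Asg Val) (Y : Finset ν) (yv : Asg Val) :
    extBasicCond N a X xv Y yv =
      (∑ n : Asg B, N.cfBasic (X.image Sum.inl) (liftAsg xv) (Y.image Sum.inl) (liftAsg yv)
        (sumAsg a n) * N.joint (sumAsg a n)) / ∑ n : Asg B, N.joint (sumAsg a n) := by
  have sum_fiber (F : Asg (SumVal Val B) → ℝ) :
      (∑ w : Asg (SumVal Val B), if ∀ i : ν, w (Sum.inl i) = a i then F w else 0) =
        ∑ n : Asg B, F (sumAsg a n) := by
    let inrAsg (w : Asg (SumVal Val B)) : Asg B := fun p => w (Sum.inr p)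
    have sumAsg_inrAsg (w : Asg (SumVal Val B)) (hw : ∀ i : ν, w (Sum.inl i) = a i) :
        sumAsg a (inrAsg w) = w := by
      funext i
      cases i with
      | inl i => exact (hw i).symm
      | inr p => rfl
    rw [← sum_filter]
    exact sum_nbij' inrAsg (sumAsg a) (fun _ _ => mem_univ _)
      (fun n _ => (mem_filter_univ _).2 fun _ => rfl)
      (fun w hw => sumAsg_inrAsg w ((mem_filter_univ w).1 hw)) (fun _ _ => rfl)
      (fun w hw => congrArg F (sumAsg_inrAsg w ((mem_filter_univ w).1 hw)).symm)
  unfold extBasicCond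
  rw [sum_fiber, sum_fiber]

namespace CM

section InterventionalDistribution

variable {ν : Type} {Val : ν → Type} [Fintype ν] {M : CM ν Val}

/-- The probability `P(U = u)` of the exogenous part of a world. -/
def exoProb (M : CM ν Val) (u : Asg Val) : ℝ := ∏ i ∈ M.exo, M.cpt i u (u i)

/-- The endogenous variables `V ∖ X`, whose mechanisms the intervention `do(X = x)` keeps. -/
def freeVars (M : CM ν Val) (X : Finset ν) : Finset ν := M.exoᶜ \ X

theorem mem_freeVars {X : Finset ν} {i : ν} : i ∈ M.freeVars X ↔ i ∉ M.exo ∧ i ∉ X := by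
  rw [freeVars, mem_sdiff, mem_compl]

theorem pdo_eq_exoProb_mul_prod (M : CM ν Val) {X : Finset ν} (hX : ∀ i ∈ X, i ∉ M.exo)
    {xv w : Asg Val} (hw : ∀ i ∈ X, w i = xv i) :
    M.pdo X xv w = M.exoProb w * ∏ i ∈ M.freeVars X, M.cpt i w (w i) := by
  have exo_subset : M.exo ⊆ Xᶜ := fun i hi => mem_compl.2 fun hiX => hX i hiX hi
  have sdiff_exo : Xᶜ \ M.exo = M.freeVars X := by
    ext i
    rw [mem_sdiff, mem_compl, mem_freeVars, and_comm]
  rw [pdo, if_pos hw, ← prod_sdiff exo_subset, sdiff_exo, mul_comm, exoProb]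

theorem joint_eq_exoProb_mul_prod (M : CM ν Val) (w : Asg Val) :
    M.joint w = M.exoProb w * ∏ i ∈ M.freeVars ∅, M.cpt i w (w i) := by
  rw [freeVars, sdiff_empty, exoProb, prod_mul_prod_compl, joint]

theorem refine_cpt_self (M : CM ν Val) (a : Asg Val) {i : ν} (hi : i ∉ M.exo) (x : Val i) :
    (M.refine a).cpt i a x = if x = a i then 1 else 0 :=
  if_pos ⟨hi, fun _ _ => rfl⟩

variable [∀ i, Fintype (Val i)]

theorem WF.sum_prod_cpt_eq_one (hM : M.WF) (S : Finset ν) (w₀ : Asg Val) :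
    ∑ w : Asg Val with ∀ i ∉ S, w i = w₀ i, ∏ i ∈ S, M.cpt i w (w i) = 1 := by
  -- Sum out the variables of `S` one at a time, each before all of its parents.
  induction S using Finset.induction_on_max_value M.ord with
  | empty =>
    have : ({w | ∀ i ∉ (∅ : Finset ν), w i = w₀ i} : Finset (Asg Val)) = {w₀} := by
      ext w
      simp [funext_iff]
    rw [this, sum_singleton, prod_empty]
  | insert m S hmS hmax ih =>
    have not_mem_pa (i : ν) (hi : i ∈ S) : m ∉ M.pa i := fun hm =>
      (hmax i hi).not_gt (hM.acyclic i m hm)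
    have prod_update (w : Asg Val) (x : Val m) :
        ∏ i ∈ insert m S, M.cpt i (Function.update w m x) (Function.update w m x i) =
          (∏ i ∈ S, M.cpt i w (w i)) * M.cpt m w x := by
      have not_mem_self : m ∉ M.pa m := fun hm => (hM.acyclic m m hm).false
      have cpt_update (i : ν) (hm : m ∉ M.pa i) :
          M.cpt i (Function.update w m x) = M.cpt i w :=
        funext fun y => hM.cpt_pa i _ _ y fun j hj =>
          Function.update_of_ne (ne_of_mem_of_not_mem hj hm) _ _
      rw [prod_insert hmS, mul_comm, cpt_update m not_mem_self, Function.update_self]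
      congr 1
      refine prod_congr rfl fun i hi => ?_
      rw [cpt_update i (not_mem_pa i hi), Function.update_of_ne (ne_of_mem_of_not_mem hi hmS)]
    simp only [sum_filter_eqOn_compl_insert hmS, prod_update, ← mul_sum, hM.cpt_sum, mul_one, ih]

theorem WF.exoProb_congr (hM : M.WF) {u w : Asg Val} (h : ∀ i ∈ M.exo, w i = u i) :
    M.exoProb w = M.exoProb u := by
  refine prod_congr rfl fun i hi => ?_
  rw [h i hi]
  exact hM.cpt_pa i _ _ _ (by simp [hM.pa_exo i hi])

theorem WF.sum_pdo_eq_exoProb (hM : M.WF) {X : Finset ν} (hX : ∀ i ∈ X, i ∉ M.exo)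
    (xv u : Asg Val) :
    ∑ w : Asg Val with ∀ i ∈ M.exo, w i = u i, M.pdo X xv w = M.exoProb u := by
  let w₀ : Asg Val := fun i => if i ∈ X then xv i else u i
  have agree_iff (w : Asg Val) : (∀ i ∉ M.freeVars X, w i = w₀ i) ↔
      (∀ i ∈ M.exo, w i = u i) ∧ ∀ i ∈ X, w i = xv i := by
    simp only [mem_freeVars, not_and_or, not_not, w₀]
    refine ⟨fun h => ⟨fun i hi => ?_, fun i hi => ?_⟩, fun ⟨hu, hx⟩ i hi => ?_⟩
    · rw [h i (Or.inl hi), if_neg fun hiX => hX i hiX hi]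
    · rw [h i (Or.inr hi), if_pos hi]
    · split_ifs with hiX
      · exact hx i hiX
      · exact hu i (hi.resolve_right hiX)
  calc ∑ w : Asg Val with ∀ i ∈ M.exo, w i = u i, M.pdo X xv w
      = ∑ w : Asg Val with ∀ i ∉ M.freeVars X, w i = w₀ i, M.pdo X xv w := by
        simp only [agree_iff, ← filter_filter]
        refine (sum_filter_of_ne fun w _ hw => ?_).symm
        by_contra h
        exact hw (if_neg h)
    _ = ∑ w : Asg Val with ∀ i ∉ M.freeVars X, w i = w₀ i,
          M.exoProb u * ∏ i ∈ M.freeVars X, M.cpt i w (w i) := by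
        refine sum_congr rfl fun w hw => ?_
        obtain ⟨hu, hx⟩ := (agree_iff w).1 ((mem_filter_univ w).1 hw)
        rw [M.pdo_eq_exoProb_mul_prod hX hx, hM.exoProb_congr hu]
    _ = M.exoProb u := by rw [← mul_sum, hM.sum_prod_cpt_eq_one, mul_one]

theorem WF.cfBasic_eq_prod (hM : M.WF) {X : Finset ν} (hX : ∀ i ∈ X, i ∉ M.exo)
    {Y : Finset ν} (hY : ∀ i ∉ M.exo, i ∈ Y) {xv yv u w : Asg Val} (hu : M.exoProb u ≠ 0)
    (hwu : ∀ i ∈ M.exo, w i = u i) (hwx : ∀ i ∈ X, w i = xv i) (hwy : ∀ i ∈ Y, w i = yv i) :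
    M.cfBasic X xv Y yv u = ∏ i ∈ M.freeVars X, M.cpt i w (w i) := by
  have event_eq : ({w' | (∀ i ∈ M.exo, w' i = u i) ∧ ∀ i ∈ Y, w' i = yv i} :
      Finset (Asg Val)) = {w} := by
    ext w'
    rw [mem_filter_univ, mem_singleton]
    refine ⟨fun ⟨h₁, h₂⟩ => funext fun i => ?_, fun h => h ▸ ⟨hwu, hwy⟩⟩
    by_cases hi : i ∈ M.exo
    · rw [h₁ i hi, hwu i hi]
    · rw [h₂ i (hY i hi), hwy i (hY i hi)]
  rw [cfBasic, ← sum_filter, ← sum_filter, event_eq, sum_singleton, hM.sum_pdo_eq_exoProb hX,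
    M.pdo_eq_exoProb_mul_prod hX hwx, hM.exoProb_congr hwu, mul_div_cancel_left₀ _ hu]

end InterventionalDistribution

section PotentialOutcomes

variable {ν : Type} {Val : ν → Type} {M : CM ν Val}

/-- The potential outcome variable that determines the endogenous variable `i` in the worlds
whose variables of `M` take the values `c`. -/
def activePO (M : CM ν Val) (c : Asg Val) (i : {i // i ∉ M.exo}) : POI M := ⟨i, fun j => c j.1⟩

theorem activePO_injective (M : CM ν Val) (c : Asg Val) :
    Function.Injective (M.activePO c) := fun _ _ h => congrArg Sigma.fst h

variable [∀ i, Nonempty (Val i)]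

theorem extendPa_activePO (M : CM ν Val) (c : Asg Val) (i : {i // i ∉ M.exo}) {j : ν}
    (hj : j ∈ M.pa i) : M.extendPa i.1 (M.activePO c i).2 j = c j :=
  dif_pos hj

/-- The distribution of the potential outcome variable `p` in `M^N`. -/
def poPrior (M : CM ν Val) (p : POI M) (x : POB M p) : ℝ :=
  M.cpt p.1.1 (M.extendPa p.1.1 p.2) x

variable [Fintype ν]

/-- The distribution of the potential outcome variable `p` in `M^N` conditional on the values
`a` of the variables of `M`; by `WF.MN_joint` the potential outcome variables stay independent
under this conditioning. -/
def poPosterior (M : CM ν Val) (a : Asg Val) (p : POI M) (x : POB M p) : ℝ :=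
  (M.refine a).cpt p.1.1 (M.extendPa p.1.1 p.2) x

theorem poPosterior_of_ne_activePO (M : CM ν Val) {a : Asg Val} {p : POI M}
    (hp : p ≠ M.activePO a p.1) (x : POB M p) : M.poPosterior a p x = M.poPrior p x := by
  refine if_neg fun h => hp (Sigma.ext rfl (heq_of_eq (funext fun j => ?_)))
  exact (dif_pos j.2).symm.trans (h.2 j.1 j.2)

variable [∀ i, Fintype (Val i)]

theorem WF.poPrior_activePO (hM : M.WF) (c : Asg Val) (i : {i // i ∉ M.exo}) (x : Val i.1) :
    M.poPrior (M.activePO c i) x = M.cpt i.1 c x :=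
  hM.cpt_pa _ _ _ _ fun _ => M.extendPa_activePO c i

theorem WF.poPosterior_activePO (hM : M.WF) (a c : Asg Val) (i : {i // i ∉ M.exo})
    (x : Val i.1) :
    M.poPosterior a (M.activePO c i) x = (M.refine a).cpt i.1 c x :=
  (hM.refine a).cpt_pa i.1 _ c x fun _ => M.extendPa_activePO c i

theorem WF.ite_mul_poPrior_activePO (hM : M.WF) (a : Asg Val) (i : {i // i ∉ M.exo})
    (x : Val i.1) :
    (if a i.1 = x then 1 else 0) * M.poPrior (M.activePO a i) x =
      M.cpt i.1 a (a i.1) * M.poPosterior a (M.activePO a i) x := by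
  rw [hM.poPrior_activePO, hM.poPosterior_activePO, M.refine_cpt_self a i.2]
  by_cases hx : a i.1 = x
  · simp [hx]
  · simp [hx, Ne.symm hx]

theorem WF.prod_ite_mul_prod_poPrior (hM : M.WF) (a : Asg Val) (n : Asg (POB M)) :
    (∏ i, if a i.1 = n (M.activePO a i) then 1 else 0) * ∏ p, M.poPrior p (n p) =
      (∏ i : {i // i ∉ M.exo}, M.cpt i.1 a (a i.1)) * ∏ p, M.poPosterior a p (n p) := by
  let active : Finset (POI M) := univ.image (M.activePO a)
  have prod_active (f : POI M → ℝ) :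
      ∏ p, f p = (∏ i, f (M.activePO a i)) * ∏ p ∈ activeᶜ, f p := by
    rw [← prod_mul_prod_compl active, prod_image (M.activePO_injective a).injOn]
  have inactive_eq (p : POI M) (hp : p ∈ activeᶜ) :
      M.poPosterior a p (n p) = M.poPrior p (n p) :=
    M.poPosterior_of_ne_activePO (fun h => mem_compl.1 hp
      (mem_image.2 ⟨p.1, mem_univ _, h.symm⟩)) _
  rw [prod_active, prod_active, prod_congr rfl inactive_eq, ← mul_assoc, ← mul_assoc,
    ← prod_mul_distrib, ← prod_mul_distrib]
  congr 1
  exact prod_congr rfl fun i _ => hM.ite_mul_poPrior_activePO a i _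

theorem WF.sum_prod_ite_mul_prod_poPosterior (hM : M.WF) (a b : Asg Val)
    (T : Finset {i // i ∉ M.exo}) :
    ∑ n : Asg (POB M), (∏ i ∈ T, if b i.1 = n (M.activePO b i) then 1 else 0) *
        ∏ p, M.poPosterior a p (n p) =
      ∏ i ∈ T, (M.refine a).cpt i.1 b (b i.1) := by
  have indicator_eq (n : Asg (POB M)) :
      (∏ i ∈ T, if b i.1 = n (M.activePO b i) then (1 : ℝ) else 0) =
        if ∀ p ∈ T.image (M.activePO b), n p = b p.1.1 then 1 else 0 := by
    have agree_iff : (∀ i ∈ T, b i.1 = n (M.activePO b i)) ↔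
        ∀ p ∈ T.image (M.activePO b), n p = b p.1.1 :=
      ⟨fun h => forall_mem_image.2 fun i hi => (h i hi).symm,
        fun h i hi => (h _ (mem_image_of_mem _ hi)).symm⟩
    rw [prod_boole]
    simp only [agree_iff]
  simp only [indicator_eq, ite_mul, one_mul, zero_mul, ← sum_filter]
  refine (sum_filter_eqOn_prod_eq_prod (M.poPosterior a) _
    (fun p _ => (hM.refine a).cpt_sum p.1.1 _) fun p => b p.1.1).trans ?_
  rw [prod_image (M.activePO_injective b).injOn]
  exact prod_congr rfl fun i _ => hM.poPosterior_activePO a b i _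

end PotentialOutcomes

section PotentialOutcomeModel

variable {ν : Type} {Val : ν → Type} [Fintype ν] [∀ i, Fintype (Val i)] [∀ i, Nonempty (Val i)]
  {M : CM ν Val}

theorem MN_cpt_inl_of_mem (M : CM ν Val) {i : ν} (hi : i ∈ M.exo)
    (w : Asg (SumVal Val (POB M))) (x : Val i) :
    M.MN.cpt (Sum.inl i) w x = M.cpt i (fun k => w (Sum.inl k)) x :=
  dif_pos hi

theorem MN_cpt_inl_of_notMem (M : CM ν Val) {i : ν} (hi : i ∉ M.exo)
    (w : Asg (SumVal Val (POB M))) (x : Val i) :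
    M.MN.cpt (Sum.inl i) w x =
      if x = w (Sum.inr (M.activePO (fun k => w (Sum.inl k)) ⟨i, hi⟩)) then 1 else 0 :=
  dif_neg hi

theorem WF.MN_cpt_inl_congr (hM : M.WF) {i : ν} {w w' : Asg (SumVal Val (POB M))}
    (h : ∀ j ∈ M.MN.pa (Sum.inl i), w j = w' j) (x : Val i) :
    M.MN.cpt (Sum.inl i) w x = M.MN.cpt (Sum.inl i) w' x := by
  have agree_pa (j : ν) (hj : j ∈ M.pa i) : w (Sum.inl j) = w' (Sum.inl j) :=
    h _ (by simp [CM.MN, hj])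
  by_cases hi : i ∈ M.exo
  · exact (M.MN_cpt_inl_of_mem hi w x).trans <|
      (hM.cpt_pa i _ _ x agree_pa).trans (M.MN_cpt_inl_of_mem hi w' x).symm
  · have po_mem_pa : Sum.inr (M.activePO (fun k => w (Sum.inl k)) ⟨i, hi⟩) ∈
        M.MN.pa (Sum.inl i) :=
      mem_union_right _ (mem_image_of_mem _ ((mem_filter_univ _).2 rfl))
    have restrict_eq : @Eq (M.PaAsg i) (fun j => w (Sum.inl j.1))
        fun j => w' (Sum.inl j.1) := funext fun j => agree_pa j.1 j.2
    let po_value (κ : M.PaAsg i) : Val i := w' (Sum.inr ⟨⟨i, hi⟩, κ⟩)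
    have po_value_eq : (w (Sum.inr (M.activePO (fun k => w (Sum.inl k)) ⟨i, hi⟩)) : Val i) =
        w' (Sum.inr (M.activePO (fun k => w' (Sum.inl k)) ⟨i, hi⟩)) :=
      Eq.trans (h _ po_mem_pa) (congrArg po_value restrict_eq)
    exact (M.MN_cpt_inl_of_notMem hi w x).trans <|
      (congrArg (fun y : Val i => if x = y then (1 : ℝ) else 0) po_value_eq).trans
        (M.MN_cpt_inl_of_notMem hi w' x).symm

theorem WF.MN (hM : M.WF) : M.MN.WF where
  pa_exo i hi := by
    rcases i with i | p
    · have hi : i ∈ M.exo := by simpa [CM.MN] using hi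
      ext (j | p)
      · simp [CM.MN, hM.pa_exo i hi]
      · simpa [CM.MN] using fun h : p.1.1 = i => p.1.2 (h ▸ hi)
    · rfl
  acyclic i j hj := by
    rcases i with i | p
    · rcases j with j | p
      · exact Nat.succ_lt_succ (hM.acyclic i j (by simpa [CM.MN] using hj))
      · exact Nat.succ_pos _
    · exact absurd hj (notMem_empty j)
  cpt_pa i w w' x h := by
    rcases i with i | p
    · exact hM.MN_cpt_inl_congr h x
    · rfl
  cpt_nonneg i w x := by
    rcases i with i | p
    · by_cases hi : i ∈ M.exo
      · exact (hM.cpt_nonneg i _ x).trans_eq (M.MN_cpt_inl_of_mem hi w x).symm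
      · refine le_of_le_of_eq ?_ (M.MN_cpt_inl_of_notMem hi w x).symm
        split_ifs
        exacts [zero_le_one, le_rfl]
    · exact hM.cpt_nonneg _ _ _
  cpt_sum i w := by
    rcases i with i | p
    · by_cases hi : i ∈ M.exo
      · exact (Fintype.sum_congr _ _ (M.MN_cpt_inl_of_mem hi w)).trans (hM.cpt_sum i _)
      · exact (Fintype.sum_congr _ _ (M.MN_cpt_inl_of_notMem hi w)).trans
          (Fintype.sum_ite_eq' _ _)
    · exact hM.cpt_sum _ _

theorem MN_freeVars (M : CM ν Val) (X : Finset ν) :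
    M.MN.freeVars (X.image Sum.inl) = (M.freeVars X).image Sum.inl := by
  ext (i | p) <;> simp [mem_freeVars, MN]

theorem MN_exoProb (M : CM ν Val) (c : Asg Val) (n : Asg (POB M)) :
    M.MN.exoProb (sumAsg c n) = M.exoProb c * ∏ p, M.poPrior p (n p) := by
  have disjoint : Disjoint (M.exo.image (Sum.inl : ν → ν ⊕ POI M)) (univ.image Sum.inr) := by
    simp [disjoint_left]
  refine (prod_union disjoint).trans ?_
  rw [prod_image Sum.inl_injective.injOn, prod_image Sum.inr_injective.injOn]
  congr 1
  exact prod_congr rfl fun i hi => M.MN_cpt_inl_of_mem hi _ _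

theorem prod_MN_cpt_freeVars (M : CM ν Val) (X : Finset ν) (c : Asg Val) (n : Asg (POB M)) :
    ∏ i ∈ M.MN.freeVars (X.image Sum.inl), M.MN.cpt i (sumAsg c n) (sumAsg c n i) =
      ∏ i ∈ (M.freeVars X).subtype (· ∉ M.exo),
        if c i.1 = n (M.activePO c i) then 1 else 0 := by
  rw [MN_freeVars, prod_image Sum.inl_injective.injOn,
    ← prod_subtype_of_mem _ fun i hi => (mem_freeVars.1 hi).1]
  exact prod_congr rfl fun i _ => M.MN_cpt_inl_of_notMem i.2 _ _

theorem WF.MN_joint (hM : M.WF) (a : Asg Val) (n : Asg (POB M)) :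
    M.MN.joint (sumAsg a n) = M.joint a * ∏ p, M.poPosterior a p (n p) := by
  have freeVars_subtype : (M.freeVars ∅).subtype (· ∉ M.exo) = univ := by
    ext i
    simpa [mem_freeVars] using i.2
  calc M.MN.joint (sumAsg a n)
      = M.exoProb a * ((∏ i, if a i.1 = n (M.activePO a i) then 1 else 0) *
          ∏ p, M.poPrior p (n p)) := by
        have prod_cpt := M.prod_MN_cpt_freeVars ∅ a n
        rw [image_empty, freeVars_subtype] at prod_cpt
        rw [joint_eq_exoProb_mul_prod, prod_cpt, MN_exoProb, mul_right_comm, mul_assoc]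
    _ = M.joint a * ∏ p, M.poPosterior a p (n p) := by
        rw [hM.prod_ite_mul_prod_poPrior, ← mul_assoc, joint_eq_exoProb_mul_prod,
          ← prod_subtype_of_mem _ fun i hi => (mem_freeVars.1 hi).1, freeVars_subtype]

theorem WF.MN_cfBasic (hM : M.WF) {a b xv : Asg Val} {X : Finset ν} (hX : ∀ i ∈ X, i ∉ M.exo)
    (hbu : ∀ i ∈ M.exo, b i = a i) (hbx : ∀ i ∈ X, b i = xv i) {n : Asg (POB M)}
    (hn : M.MN.exoProb (sumAsg a n) ≠ 0) :
    M.MN.cfBasic (X.image Sum.inl) (liftAsg xv) (M.exoᶜ.image Sum.inl) (liftAsg b)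
        (sumAsg a n) =
      ∏ i ∈ (M.freeVars X).subtype (· ∉ M.exo),
        if b i.1 = n (M.activePO b i) then 1 else 0 := by
  have mem_exo {i : ν} : Sum.inl i ∈ M.MN.exo ↔ i ∈ M.exo := by simp [CM.MN]
  refine (hM.MN.cfBasic_eq_prod (w := sumAsg b n) ?_ ?_ hn ?_ ?_ ?_).trans
    (M.prod_MN_cpt_freeVars X b n)
  · exact forall_mem_image.2 fun i hi => fun h => hX i hi (mem_exo.1 h)
  · rintro (i | p) hi
    · exact mem_image_of_mem _ (mem_compl.2 fun h => hi (mem_exo.2 h))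
    · simp [CM.MN] at hi
  · rintro (i | p) hi
    · exact hbu i (mem_exo.1 hi)
    · rfl
  · exact forall_mem_image.2 hbx
  · exact forall_mem_image.2 fun _ _ => rfl

theorem WF.pnBasicCond_eq_prod_refine_cpt (hM : M.WF) {a b xv : Asg Val} (ha : M.joint a ≠ 0)
    {X : Finset ν} (hX : ∀ i ∈ X, i ∉ M.exo)
    (hbu : ∀ i ∈ M.exo, b i = a i) (hbx : ∀ i ∈ X, b i = xv i) :
    M.pnBasicCond a X xv M.exoᶜ b = ∏ i ∈ M.freeVars X, (M.refine a).cpt i b (b i) := by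
  let structural (n : Asg (POB M)) : ℝ := ∏ i ∈ (M.freeVars X).subtype (· ∉ M.exo),
    if b i.1 = n (M.activePO b i) then 1 else 0
  have numerator_term (n : Asg (POB M)) :
      M.MN.cfBasic (X.image Sum.inl) (liftAsg xv) (M.exoᶜ.image Sum.inl) (liftAsg b)
          (sumAsg a n) * M.MN.joint (sumAsg a n) =
        M.joint a * (structural n * ∏ p, M.poPosterior a p (n p)) := by
    rw [mul_left_comm, ← hM.MN_joint]
    by_cases hn : M.MN.exoProb (sumAsg a n) = 0
    · rw [joint_eq_exoProb_mul_prod, hn, zero_mul, mul_zero, mul_zero]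
    · rw [hM.MN_cfBasic hX hbu hbx hn]
  have denominator : ∑ n : Asg (POB M), M.MN.joint (sumAsg a n) = M.joint a := by
    have total := hM.sum_prod_ite_mul_prod_poPosterior a a ∅
    simp only [prod_empty, one_mul] at total
    simp only [hM.MN_joint, ← mul_sum, total, mul_one]
  calc M.pnBasicCond a X xv M.exoᶜ b
      = (∑ n : Asg (POB M), M.joint a * (structural n * ∏ p, M.poPosterior a p (n p))) /
          M.joint a := by
        simp only [pnBasicCond, extBasicCond_eq_sum_div_sum, denominator, numerator_term]
    _ = ∑ n : Asg (POB M), structural n * ∏ p, M.poPosterior a p (n p) := by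
        rw [← mul_sum, mul_div_cancel_left₀ _ ha]
    _ = ∏ i ∈ M.freeVars X, (M.refine a).cpt i b (b i) := by
        rw [hM.sum_prod_ite_mul_prod_poPosterior]
        exact prod_subtype_of_mem (fun i => (M.refine a).cpt i b (b i)) fun i hi =>
          (mem_freeVars.1 hi).1

end PotentialOutcomeModel

end CM

/-- In the PO-SCM `M^N` of a causal model `M`, for every `(u, v) ∈ R(U ∪ V)` with
`P_M(u, v) > 0`, every `X ⊆ V` and every `v* ∈ R(V)` whose restriction to `X` equals
the intervention values `x*`, the probability of the basic counterfactual factorizes as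
`P^N(V = v*_{X←x*} | U = u, V = v)
  = ∏_{Y ∈ V∖X, pa_Y = pa_Y*} 1{y* = y} · ∏_{Y ∈ V∖X, pa_Y ≠ pa_Y*} P_M(Y = y* | Pa_Y = pa_Y*)`,
where for each `Y`, `(y, pa_Y)` are the values of `Y` and its parents read off from
`(u, v)` (here the world `a`) and `(y*, pa_Y*)` those read off from `(u, v*)`
(here the world `b`, which agrees with `a` on the exogenous variables). -/
theorem pnBasicCond_factorizes
    {ν : Type} {Val : ν → Type} [Fintype ν] [∀ i, Fintype (Val i)] [∀ i, Nonempty (Val i)]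
    (M : CM ν Val) (hM : M.WF)
    (a : Asg Val) (ha : 0 < M.joint a)
    (X : Finset ν) (hX : ∀ i ∈ X, i ∉ M.exo) (xv : Asg Val)
    (b : Asg Val) (hbu : ∀ i ∈ M.exo, b i = a i) (hbx : ∀ i ∈ X, b i = xv i) :
    M.pnBasicCond a X xv M.exoᶜ b
      = ∏ i ∈ M.exoᶜ \ X,
          (if ∀ j ∈ M.pa i, a j = b j then (if b i = a i then (1 : ℝ) else 0)
           else M.cpt i b (b i)) := by
  rw [hM.pnBasicCond_eq_prod_refine_cpt ha.ne' hX hbu hbx]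
  refine prod_congr rfl fun i hi => ?_
  have hi_endo : i ∉ M.exo := (CM.mem_freeVars.1 hi).1
  simp only [CM.refine, hi_endo, not_false_eq_true, true_and, eq_comm]

end
end
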